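/- Let m ≥ 9 and n ≥ m² − m + 1 be integers and let T be any tree on n vertices. Then every graph G on 2n − 1 vertices either contains the fan F_m as a subgraph or its complement contains T as a subgraph. (This is the upper bound R(T, F_m) ≤ 2n − 1 of Theorem 4; together with the standard lower bound it gives R(T, F_m) = 2n − 1.) -/

import Mathlib

/-- `Contains G H` means `G` contains a subgraph isomorphic to `H`, i.e. there is an
injective map on vertices preserving adjacency. -/
def Contains {α β : Type*} (G : SimpleGraph α) (H : SimpleGraph β) : Prop :=
  ∃ f : β → α, Function.Injective f ∧ ∀ ⦃u v⦄, H.Adj u v → G.Adj (f u) (f v)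

/-- The fan `F_m = K_1 + mK_2`: a center vertex joined to `m` disjoint edges,
so `m` triangles sharing exactly one common vertex; it has `2m + 1` vertices. -/
def fan (m : ℕ) : SimpleGraph (Unit ⊕ Fin m × Bool) :=
  SimpleGraph.fromRel (fun x y =>
    (∃ u, x = Sum.inl u) ∨ ∃ i : Fin m, x = Sum.inr (i, true) ∧ y = Sum.inr (i, false))

section
open scoped Classical

noncomputable def nb {W : Type*} (G : SimpleGraph W) (v : W) (Z : Finset W) : Finset W :=
  Z.filter (fun w => G.Adj v w)

lemma mem_nb {W : Type*} {G : SimpleGraph W} {v w : W} {Z : Finset W} :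
    w ∈ nb G v Z ↔ w ∈ Z ∧ G.Adj v w := by
  simp [nb]

lemma nb_subset {W : Type*} {G : SimpleGraph W} {v : W} {Z : Finset W} : nb G v Z ⊆ Z :=
  Finset.filter_subset _ _

lemma nb_card_le {W : Type*} {G : SimpleGraph W} {v : W} {Z : Finset W} :
    (nb G v Z).card ≤ Z.card := Finset.card_le_card nb_subset

lemma nb_mono {W : Type*} {G : SimpleGraph W} {v : W} {Z Z' : Finset W} (h : Z ⊆ Z') :
    nb G v Z ⊆ nb G v Z' := Finset.filter_subset_filter _ h

lemma nb_card_mono {W : Type*} {G : SimpleGraph W} {v : W} {Z Z' : Finset W} (h : Z ⊆ Z') :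
    (nb G v Z).card ≤ (nb G v Z').card := Finset.card_le_card (nb_mono h)

lemma nb_union_card_le {W : Type*} {G : SimpleGraph W} {v : W} {Z Z' : Finset W} :
    (nb G v (Z ∪ Z')).card ≤ (nb G v Z).card + (nb G v Z').card := by
  unfold nb
  rw [Finset.filter_union]
  exact Finset.card_union_le _ _

lemma nb_union_card {W : Type*} {G : SimpleGraph W} {v : W} {Z Z' : Finset W}
    (h : Disjoint Z Z') :
    (nb G v (Z ∪ Z')).card = (nb G v Z).card + (nb G v Z').card := by
  unfold nb
  rw [Finset.filter_union]
  exact Finset.card_union_of_disjoint (Finset.disjoint_filter_filter h)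

lemma nb_sdiff_card {W : Type*} {G : SimpleGraph W} {v : W} {Z Z' : Finset W} :
    (nb G v Z).card ≤ (nb G v (Z \ Z')).card + Z'.card := by
  have h1 : nb G v Z ⊆ nb G v (Z \ Z') ∪ Z' := by
    intro w hw
    rw [mem_nb] at hw
    by_cases h : w ∈ Z'
    · simp [h]
    · simp [mem_nb, h, hw]
  exact (Finset.card_le_card h1).trans (Finset.card_union_le _ _)

lemma nb_compl {W : Type*} {G : SimpleGraph W} {v : W} {Z : Finset W} (hv : v ∉ Z) :
    (nb G v Z).card + (nb Gᶜ v Z).card = Z.card := by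
  unfold nb
  rw [← Finset.card_filter_add_card_filter_not (s := Z) (fun w => G.Adj v w)]
  congr 2
  ext w
  simp only [Finset.mem_filter, SimpleGraph.compl_adj]
  constructor
  · rintro ⟨h1, h2, h3⟩; exact ⟨h1, h3⟩
  · rintro ⟨h1, h3⟩; exact ⟨h1, fun h => hv (h ▸ h1), h3⟩

lemma nb_erase {W : Type*} {G : SimpleGraph W} {v : W} {Z : Finset W} :
    nb G v (Z.erase v) = nb G v Z := by
  ext w
  simp only [mem_nb, Finset.mem_erase]
  constructor
  · rintro ⟨⟨_, h⟩, h'⟩; exact ⟨h, h'⟩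
  · rintro ⟨h, h'⟩; exact ⟨⟨h'.ne', h⟩, h'⟩

lemma nb_compl_mem {W : Type*} {G : SimpleGraph W} {v : W} {Z : Finset W} (hv : v ∈ Z) :
    (nb G v Z).card + (nb Gᶜ v Z).card + 1 = Z.card := by
  have h := nb_compl (G := G) (Finset.notMem_erase v Z)
  rw [nb_erase, nb_erase] at h
  rw [h, Finset.card_erase_add_one hv]

lemma nb_compl_le {W : Type*} {G : SimpleGraph W} {v : W} {Z : Finset W} :
    (nb G v Z).card + (nb Gᶜ v Z).card ≤ Z.card ∧
    Z.card ≤ (nb G v Z).card + (nb Gᶜ v Z).card + 1 := by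
  by_cases hv : v ∈ Z
  · have := nb_compl_mem (G := G) hv; omega
  · have := nb_compl (G := G) hv; omega

/-- common neighbours lower bound -/
lemma nb_inter_card {W : Type*} {G : SimpleGraph W} {u v : W} {Z : Finset W} :
    (nb G u Z).card + (nb G v Z).card ≤ (nb G u (nb G v Z)).card + Z.card := by
  have h1 : nb G u (nb G v Z) = nb G u Z ∩ nb G v Z := by
    ext w; simp only [mem_nb, Finset.mem_inter]; tauto
  rw [h1, ← Finset.card_union_add_card_inter, add_comm]
  have : (nb G u Z ∪ nb G v Z).card ≤ Z.card :=
    Finset.card_le_card (Finset.union_subset nb_subset nb_subset)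
  omega

lemma nb_comm_card {W : Type*} {G : SimpleGraph W} {A B : Finset W} :
    ∑ a ∈ A, (nb G a B).card = ∑ b ∈ B, (nb G b A).card := by
  unfold nb
  simp only [Finset.card_filter]
  rw [Finset.sum_comm]
  refine Finset.sum_congr rfl fun a _ => Finset.sum_congr rfl fun b _ => ?_
  simp [SimpleGraph.adj_comm]

lemma hall_greedy {ι α : Type*} (t : ι → Finset α)
    (h : ∀ s : Finset ι, s.Nonempty → ∃ x ∈ s, s.card ≤ (t x).card) :
    ∃ f : ι → α, Function.Injective f ∧ ∀ x, f x ∈ t x := by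
  refine (Finset.all_card_le_biUnion_card_iff_exists_injective t).1 fun s => ?_
  rcases s.eq_empty_or_nonempty with rfl | hs
  · simp
  · obtain ⟨x, hx, hc⟩ := h s hs
    exact hc.trans (Finset.card_le_card (Finset.subset_biUnion_of_mem t hx))

/-- `G` has a matching of size `s` inside `Z`. -/
def HasM {W : Type*} (G : SimpleGraph W) (Z : Finset W) (s : ℕ) : Prop :=
  ∃ x y : Fin s → W, Function.Injective x ∧ Function.Injective y ∧ (∀ i j, x i ≠ y j) ∧
    (∀ i, x i ∈ Z) ∧ (∀ i, y i ∈ Z) ∧ ∀ i, G.Adj (x i) (y i)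

lemma HasM.mono {W : Type*} {G : SimpleGraph W} {Z Z' : Finset W} {s : ℕ}
    (h : HasM G Z s) (hZ : Z ⊆ Z') : HasM G Z' s := by
  obtain ⟨x, y, h1, h2, h3, h4, h5, h6⟩ := h
  exact ⟨x, y, h1, h2, h3, fun i => hZ (h4 i), fun i => hZ (h5 i), h6⟩

lemma HasM.le {W : Type*} {G : SimpleGraph W} {Z : Finset W} {s s' : ℕ}
    (h : HasM G Z s) (hs : s' ≤ s) : HasM G Z s' := by
  obtain ⟨x, y, h1, h2, h3, h4, h5, h6⟩ := h
  refine ⟨x ∘ Fin.castLE hs, y ∘ Fin.castLE hs, h1.comp (Fin.castLE_injective hs),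
    h2.comp (Fin.castLE_injective hs), fun i j => h3 _ _, fun i => h4 _, fun i => h5 _,
    fun i => h6 _⟩

lemma HasM.of_fintype {W ι : Type*} [Fintype ι] {G : SimpleGraph W} {Z : Finset W}
    (x y : ι → W) (h1 : Function.Injective x) (h2 : Function.Injective y)
    (h3 : ∀ i j, x i ≠ y j) (h4 : ∀ i, x i ∈ Z) (h5 : ∀ i, y i ∈ Z)
    (h6 : ∀ i, G.Adj (x i) (y i)) : HasM G Z (Fintype.card ι) := by
  let e := (Fintype.equivFin ι).symm
  exact ⟨x ∘ e, y ∘ e, h1.comp e.injective, h2.comp e.injective, fun i j => h3 _ _,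
    fun i => h4 _, fun i => h5 _, fun i => h6 _⟩

lemma HasM.add {W : Type*} {G : SimpleGraph W} {Z Z' : Finset W} {s s' : ℕ}
    (h : HasM G Z s) (h' : HasM G Z' s') (hd : Disjoint Z Z') : HasM G (Z ∪ Z') (s + s') := by
  obtain ⟨x, y, h1, h2, h3, h4, h5, h6⟩ := h
  obtain ⟨x', y', h1', h2', h3', h4', h5', h6'⟩ := h'
  rw [Finset.disjoint_left] at hd
  have hne : ∀ a ∈ Z, ∀ b ∈ Z', a ≠ b := fun a ha b hb hab => hd ha (hab ▸ hb)
  have := HasM.of_fintype (G := G) (Z := Z ∪ Z') (Sum.elim x x') (Sum.elim y y')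
    (h1.sumElim h1' fun a b => hne _ (h4 a) _ (h4' b))
    (h2.sumElim h2' fun a b => hne _ (h5 a) _ (h5' b))
    (by
      rintro (i | i) (j | j)
      · exact h3 i j
      · exact hne _ (h4 i) _ (h5' j)
      · exact (hne _ (h5 j) _ (h4' i)).symm
      · exact h3' i j)
    (by rintro (i | i) <;> simp [h4, h4'])
    (by rintro (i | i) <;> simp [h5, h5'])
    (by rintro (i | i) <;> simp [h6, h6'])
  simpa using this

lemma HasM.support {W : Type*} {G : SimpleGraph W} {Z : Finset W} {s : ℕ}
    (h : HasM G Z s) : ∃ M ⊆ Z, M.card = 2 * s ∧ HasM G M s := by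
  obtain ⟨x, y, h1, h2, h3, h4, h5, h6⟩ := h
  refine ⟨Finset.univ.image x ∪ Finset.univ.image y, ?_, ?_, x, y, h1, h2, h3, ?_, ?_, h6⟩
  · intro w; simp only [Finset.mem_union, Finset.mem_image, Finset.mem_univ, true_and]
    rintro (⟨i, rfl⟩ | ⟨i, rfl⟩)
    exacts [h4 i, h5 i]
  · rw [Finset.card_union_of_disjoint, Finset.card_image_of_injective _ h1,
      Finset.card_image_of_injective _ h2]
    · simp; omega
    · rw [Finset.disjoint_left]
      simp only [Finset.mem_image, Finset.mem_univ, true_and]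
      rintro _ ⟨i, rfl⟩ ⟨j, h⟩
      exact h3 i j h.symm
  · intro i; simp
  · intro i; simp

/-- cross matching from Hall -/
lemma HasM.cross {W : Type*} {G : SimpleGraph W} {A Z : Finset W} (hd : Disjoint A Z)
    (h : ∀ a ∈ A, A.card ≤ (nb G a Z).card) : HasM G (A ∪ Z) A.card := by
  obtain ⟨f, hf, hft⟩ := hall_greedy (fun a : A => nb G a.1 Z) (fun s hs => by
    obtain ⟨x, hx⟩ := hs
    refine ⟨x, hx, ?_⟩
    have : s.card ≤ A.card := by simpa using Finset.card_le_univ s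
    exact this.trans (h x.1 x.2))
  rw [Finset.disjoint_left] at hd
  have := HasM.of_fintype (G := G) (Z := A ∪ Z) (fun a : A => a.1) f
    Subtype.val_injective hf
    (fun i j hij => hd i.2 (hij ▸ (mem_nb.1 (hft j)).1))
    (fun i => Finset.mem_union_left _ i.2)
    (fun i => Finset.mem_union_right _ (mem_nb.1 (hft i)).1)
    (fun i => (mem_nb.1 (hft i)).2)
  simpa using this

lemma fan_of_hasM {W : Type*} {G : SimpleGraph W} {Z : Finset W} {m : ℕ} {v : W}
    (hZ : ∀ z ∈ Z, G.Adj v z) (h : HasM G Z m) : Contains G (fan m) := by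
  obtain ⟨x, y, h1, h2, h3, h4, h5, h6⟩ := h
  have hx : ∀ i, G.Adj v (x i) := fun i => hZ _ (h4 i)
  have hy : ∀ i, G.Adj v (y i) := fun i => hZ _ (h5 i)
  refine ⟨Sum.elim (fun _ => v) (fun p => if p.2 then x p.1 else y p.1), ?_, ?_⟩
  · rintro (a | ⟨i, a⟩) (b | ⟨j, b⟩) hab
    · rfl
    · cases b <;> simp at hab
      · exact absurd hab (hy j).ne
      · exact absurd hab (hx j).ne
    · cases a <;> simp at hab
      · exact absurd hab (hy i).ne'
      · exact absurd hab (hx i).ne'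
    · cases a <;> cases b <;> simp at hab
      · rw [h2 hab]
      · exact absurd hab.symm (h3 _ _)
      · exact absurd hab (h3 _ _)
      · rw [h1 hab]
  · have key : ∀ u w, u ≠ w → ((∃ a, u = Sum.inl a) ∨ ∃ i : Fin m, u = Sum.inr (i, true) ∧
        w = Sum.inr (i, false)) →
        G.Adj (Sum.elim (fun _ : Unit => v) (fun p : Fin m × Bool => if p.2 then x p.1 else y p.1) u)
          (Sum.elim (fun _ => v) (fun p => if p.2 then x p.1 else y p.1) w) := by
      rintro u w hne (⟨a, rfl⟩ | ⟨i, rfl, rfl⟩)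
      · rcases w with b | ⟨j, b⟩
        · exact absurd rfl hne
        · cases b <;> simp [hx, hy]
      · simpa using h6 i
    intro u w huw
    simp only [fan, SimpleGraph.fromRel_adj] at huw
    obtain ⟨hne, h | h⟩ := huw
    · exact key u w hne h
    · exact (key w u hne.symm h).symm

/-- Fan lemma -/
lemma fan_of_cross {W : Type*} {G : SimpleGraph W} {A Z : Finset W} {m : ℕ} {u : W}
    (hA : ∀ a ∈ A, G.Adj u a) (hAm : m ≤ A.card) (hd : Disjoint A Z)
    (h : ∀ a ∈ A, m ≤ (nb G a (nb G u Z)).card) : Contains G (fan m) := by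
  obtain ⟨A', hA', hc⟩ := Finset.exists_subset_card_eq hAm
  have hM : HasM G (A' ∪ nb G u Z) A'.card := by
    apply HasM.cross
    · exact Finset.disjoint_of_subset_left hA' (Finset.disjoint_of_subset_right nb_subset hd)
    · intro a ha; rw [hc]; exact h a (hA' ha)
  rw [hc] at hM
  refine fan_of_hasM (v := u) ?_ hM
  intro z hz
  rcases Finset.mem_union.1 hz with hz | hz
  · exact hA z (hA' hz)
  · exact (mem_nb.1 hz).2
end

section
open scoped Classical

lemma exists_max_matching {W : Type*} {G : SimpleGraph W} {S : Finset W} {m : ℕ}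
    (h : ¬ HasM G S m) : ∃ s, s < m ∧ HasM G S s ∧ ¬ HasM G S (s + 1) := by
  induction m with
  | zero =>
    exact absurd ⟨Fin.elim0, Fin.elim0, fun i => i.elim0, fun i => i.elim0, fun i => i.elim0,
      fun i => i.elim0, fun i => i.elim0, fun i => i.elim0⟩ h
  | succ k ih =>
    by_cases hk : HasM G S k
    · exact ⟨k, by omega, hk, h⟩
    · obtain ⟨s, h1, h2⟩ := ih hk
      exact ⟨s, by omega, h2⟩

/-- structure of a set without a matching of size `m` -/
lemma match_lemma {W : Type*} {G : SimpleGraph W} {S : Finset W} {m : ℕ}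
    (h : ¬ HasM G S m) : ∃ s, s < m ∧ ∃ x y : Fin s → W, ∃ I : Finset W,
      Function.Injective x ∧ Function.Injective y ∧ (∀ i j, x i ≠ y j) ∧
      (∀ i, x i ∈ S) ∧ (∀ i, y i ∈ S) ∧ (∀ i, G.Adj (x i) (y i)) ∧
      I = S \ (Finset.univ.image x ∪ Finset.univ.image y) ∧ I.card + 2 * s = S.card ∧
      (∀ a ∈ I, ∀ b ∈ I, ¬ G.Adj a b) ∧
      (∀ i, nb G (x i) I ⊆ nb G (y i) I) ∧
      (∀ i, (nb G (x i) I).Nonempty → (nb G (y i) I).card ≤ 1) := by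
  obtain ⟨s, hsm, ⟨x, y, h1, h2, h3, h4, h5, h6⟩, hmax⟩ := exists_max_matching h
  obtain ⟨I, hI⟩ : ∃ I, I = S \ (Finset.univ.image x ∪ Finset.univ.image y) := ⟨_, rfl⟩
  have hIm : ∀ a, a ∈ I ↔ a ∈ S ∧ (∀ i, x i ≠ a) ∧ ∀ i, y i ≠ a := by
    intro a; rw [hI]; simp [not_or]
  have hcard : I.card + 2 * s = S.card := by
    have hsub : Finset.univ.image x ∪ Finset.univ.image y ⊆ S := by
      intro w; simp only [Finset.mem_union, Finset.mem_image, Finset.mem_univ, true_and]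
      rintro (⟨i, rfl⟩ | ⟨i, rfl⟩)
      exacts [h4 i, h5 i]
    have hc : (Finset.univ.image x ∪ Finset.univ.image y).card = 2 * s := by
      rw [Finset.card_union_of_disjoint, Finset.card_image_of_injective _ h1,
        Finset.card_image_of_injective _ h2]
      · simp; omega
      · rw [Finset.disjoint_left]
        simp only [Finset.mem_image, Finset.mem_univ, true_and]
        rintro _ ⟨i, rfl⟩ ⟨j, h⟩
        exact h3 i j h.symm
    have := Finset.card_sdiff_add_card_eq_card hsub
    rw [hI]; omega
  have hind : ∀ a ∈ I, ∀ b ∈ I, ¬ G.Adj a b := by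
    intro a ha b hb hab
    rw [hIm] at ha hb
    apply hmax
    have := HasM.of_fintype (G := G) (Z := S) (ι := Option (Fin s))
      (fun o => o.elim a x) (fun o => o.elim b y)
      (by
        rintro (_ | i) (_ | j) hij
        · rfl
        · exact absurd hij.symm (ha.2.1 j)
        · exact absurd hij (ha.2.1 i)
        · exact congrArg some (h1 hij))
      (by
        rintro (_ | i) (_ | j) hij
        · rfl
        · exact absurd hij.symm (hb.2.2 j)
        · exact absurd hij (hb.2.2 i)
        · exact congrArg some (h2 hij))
      (by
        rintro (_ | i) (_ | j)
        · exact hab.ne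
        · exact (ha.2.2 j).symm
        · exact hb.2.1 i
        · exact h3 i j)
      (by rintro (_ | i); exacts [ha.1, h4 i])
      (by rintro (_ | i); exacts [hb.1, h5 i])
      (by rintro (_ | i); exacts [hab, h6 i])
    simpa using this
  have haug : ∀ i, ∀ a ∈ nb G (x i) I, ∀ b ∈ nb G (y i) I, a = b := by
    intro i a ha b hb
    by_contra hne
    rw [mem_nb, hIm] at ha hb
    obtain ⟨ha, hxa⟩ := ha
    obtain ⟨hb, hyb⟩ := hb
    apply hmax
    have := HasM.of_fintype (G := G) (Z := S) (ι := Option (Fin s))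
      (fun o => o.elim b x) (fun o => o.elim (y i) (fun j => if j = i then a else y j))
      (by
        rintro (_ | k) (_ | j) hij
        · rfl
        · exact absurd hij.symm (hb.2.1 j)
        · exact absurd hij (hb.2.1 k)
        · exact congrArg some (h1 hij))
      (by
        rintro (_ | k) (_ | j) hij
        · rfl
        · simp only [Option.elim] at hij
          split_ifs at hij with hh
          · exact absurd hij (ha.2.2 i)
          · exact absurd (h2 hij).symm hh
        · simp only [Option.elim] at hij
          split_ifs at hij with hh
          · exact absurd hij.symm (ha.2.2 i)
          · exact absurd (h2 hij) hh
        · simp only [Option.elim] at hij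
          split_ifs at hij with hh hh' hh'
          · rw [hh, hh']
          · exact absurd hij.symm (ha.2.2 j)
          · exact absurd hij (ha.2.2 k)
          · exact congrArg some (h2 hij))
      (by
        rintro (_ | k) (_ | j)
        · exact (hb.2.2 i).symm
        · simp only [Option.elim]
          split_ifs
          · exact Ne.symm hne
          · exact (hb.2.2 j).symm
        · exact h3 k i
        · simp only [Option.elim]
          split_ifs
          · exact ha.2.1 k
          · exact h3 k j)
      (by rintro (_ | k); exacts [hb.1, h4 k])
      (by
        rintro (_ | k)
        · exact h5 i
        · simp only [Option.elim]; split_ifs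
          · exact ha.1
          · exact h5 k)
      (by
        rintro (_ | k)
        · exact hyb.symm
        · simp only [Option.elim]; split_ifs with hh
          · rw [hh]; exact hxa
          · exact h6 k)
    simpa using this
  obtain ⟨p, hpdef⟩ : ∃ p : Fin s → Prop, ∀ i, p i ↔ nb G (y i) I = ∅ := ⟨_, fun i => Iff.rfl⟩
  refine ⟨s, hsm, fun i => if p i then y i else x i, fun i => if p i then x i else y i, I,
    ?_, ?_, ?_, ?_, ?_, ?_, ?_, hcard, hind, ?_, ?_⟩
  · intro i j hij
    dsimp only at hij
    split_ifs at hij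
    · exact h2 hij
    · exact absurd hij.symm (h3 _ _)
    · exact absurd hij (h3 _ _)
    · exact h1 hij
  · intro i j hij
    dsimp only at hij
    split_ifs at hij
    · exact h1 hij
    · exact absurd hij (h3 _ _)
    · exact absurd hij.symm (h3 _ _)
    · exact h2 hij
  · intro i j hij
    dsimp only at hij
    split_ifs at hij with ha hb hb
    · exact h3 _ _ hij.symm
    · have := h2 hij; subst this; exact hb ha
    · have := h1 hij; subst this; exact ha hb
    · exact h3 _ _ hij
  · intro i; dsimp only; split_ifs
    exacts [h5 i, h4 i]
  · intro i; dsimp only; split_ifs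
    exacts [h4 i, h5 i]
  · intro i; dsimp only; split_ifs
    exacts [(h6 i).symm, h6 i]
  · rw [hI]
    congr 1
    ext w
    simp only [Finset.mem_union, Finset.mem_image, Finset.mem_univ, true_and]
    constructor
    · rintro (⟨i, rfl⟩ | ⟨i, rfl⟩)
      · by_cases hp : p i
        · right; exact ⟨i, by simp [hp]⟩
        · left; exact ⟨i, by simp [hp]⟩
      · by_cases hp : p i
        · left; exact ⟨i, by simp [hp]⟩
        · right; exact ⟨i, by simp [hp]⟩
    · rintro (⟨i, rfl⟩ | ⟨i, rfl⟩)
      · by_cases hp : p i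
        · right; exact ⟨i, by simp [hp]⟩
        · left; exact ⟨i, by simp [hp]⟩
      · by_cases hp : p i
        · left; exact ⟨i, by simp [hp]⟩
        · right; exact ⟨i, by simp [hp]⟩
  · intro i
    by_cases hp : p i
    · simp only [hp, if_true]
      have : nb G (y i) I = ∅ := (hpdef i).1 hp
      rw [this]; exact Finset.empty_subset _
    · simp only [hp, if_false]
      obtain ⟨b, hb⟩ := Finset.nonempty_iff_ne_empty.2 (fun h => hp ((hpdef i).2 h))
      intro a ha
      rw [haug i a ha b hb]; exact hb
  · intro i hne
    by_cases hp : p i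
    · simp only [hp, if_true] at hne
      have : nb G (y i) I = ∅ := (hpdef i).1 hp
      rw [this] at hne; simp at hne
    · simp only [hp, if_false] at hne ⊢
      obtain ⟨a, ha⟩ := hne
      rw [Finset.card_le_one]
      intro b hb c hc
      rw [← haug i a ha b hb, ← haug i a ha c hc]

/-- packaged form for the embedding part -/
lemma match_lemma' {W : Type*} {G : SimpleGraph W} {S : Finset W} {m : ℕ}
    (h : ¬ HasM G S m) : ∃ s, s < m ∧ ∃ X Y I F Yl : Finset W,
      X.card = s ∧ Y.card = s ∧ I.card + 2 * s = S.card ∧ X ⊆ S ∧ Y ⊆ S ∧ I ⊆ S ∧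
      Disjoint X Y ∧ Disjoint X I ∧ Disjoint Y I ∧
      (∀ a ∈ I, ∀ b ∈ I, ¬ G.Adj a b) ∧ F ⊆ I ∧ (∀ x ∈ X, ∀ a ∈ I \ F, ¬ G.Adj x a) ∧
      Yl ⊆ Y ∧ F.card ≤ Yl.card ∧ ∀ y ∈ Yl, (nb G y I).card ≤ 1 := by
  obtain ⟨s, hsm, x, y, I, h1, h2, h3, h4, h5, h6, hI, hc, hind, hsub, hone⟩ := match_lemma h
  have hIm : ∀ a, a ∈ I ↔ a ∈ S ∧ (∀ i, x i ≠ a) ∧ ∀ i, y i ≠ a := by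
    intro a; rw [hI]; simp [not_or]
  refine ⟨s, hsm, Finset.univ.image x, Finset.univ.image y, I,
    I.filter (fun a => ∃ i, G.Adj (x i) a),
    (Finset.univ.filter (fun i => (nb G (x i) I).Nonempty)).image y, ?_, ?_, hc, ?_, ?_, ?_,
    ?_, ?_, ?_, hind, Finset.filter_subset _ _, ?_, ?_, ?_, ?_⟩
  · rw [Finset.card_image_of_injective _ h1]; simp
  · rw [Finset.card_image_of_injective _ h2]; simp
  · intro w; simp only [Finset.mem_image, Finset.mem_univ, true_and]; rintro ⟨i, rfl⟩; exact h4 i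
  · intro w; simp only [Finset.mem_image, Finset.mem_univ, true_and]; rintro ⟨i, rfl⟩; exact h5 i
  · rw [hI]; exact Finset.sdiff_subset
  · rw [Finset.disjoint_left]; simp only [Finset.mem_image, Finset.mem_univ, true_and]
    rintro _ ⟨i, rfl⟩ ⟨j, hj⟩; exact h3 i j hj.symm
  · rw [Finset.disjoint_left]; simp only [Finset.mem_image, Finset.mem_univ, true_and]
    rintro _ ⟨i, rfl⟩ hj; exact ((hIm _).1 hj).2.1 i rfl
  · rw [Finset.disjoint_left]; simp only [Finset.mem_image, Finset.mem_univ, true_and]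
    rintro _ ⟨i, rfl⟩ hj; exact ((hIm _).1 hj).2.2 i rfl
  · simp only [Finset.mem_image, Finset.mem_univ, true_and, Finset.mem_sdiff, Finset.mem_filter]
    rintro _ ⟨i, rfl⟩ a ⟨ha, hb⟩ hadj
    exact hb ⟨ha, i, hadj⟩
  · exact Finset.image_subset_image (Finset.filter_subset _ _)
  · rw [Finset.card_image_of_injective _ h2]
    have : I.filter (fun a => ∃ i, G.Adj (x i) a) ⊆
        (Finset.univ.filter (fun i => (nb G (x i) I).Nonempty)).biUnion
          (fun i => nb G (y i) I) := by
      intro a ha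
      obtain ⟨ha, i, hi⟩ := Finset.mem_filter.1 ha
      have hm : a ∈ nb G (x i) I := mem_nb.2 ⟨ha, hi⟩
      refine Finset.mem_biUnion.2 ⟨i, ?_, hsub i hm⟩
      simp only [Finset.mem_filter, Finset.mem_univ, true_and]; exact ⟨a, hm⟩
    refine (Finset.card_le_card this).trans ?_
    refine (Finset.card_biUnion_le_card_mul _ _ 1 ?_).trans (by omega)
    intro i hi
    exact hone i (Finset.mem_filter.1 hi).2
  · intro w hw
    obtain ⟨i, hi, rfl⟩ := Finset.mem_image.1 hw
    exact hone i (Finset.mem_filter.1 hi).2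

/-- few nonisolated vertices -/
lemma star_cover {W : Type*} {G : SimpleGraph W} {S : Finset W} {m ν : ℕ} (hm : 2 ≤ m)
    (hdeg : ∀ v ∈ S, (nb G v S).card ≤ m - 1) (h : ¬ HasM G S (ν + 1)) :
    (S.filter (fun v => (nb G v S).Nonempty)).card ≤ ν * m := by
  obtain ⟨s, hsm, x, y, I, h1, h2, h3, h4, h5, h6, hI, hc, hind, hsub, hone⟩ := match_lemma h
  have hIm : ∀ a, a ∈ I ↔ a ∈ S ∧ (∀ i, x i ≠ a) ∧ ∀ i, y i ≠ a := by
    intro a; rw [hI]; simp [not_or]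
  have hIS : I ⊆ S := by rw [hI]; exact Finset.sdiff_subset
  have key : S.filter (fun v => (nb G v S).Nonempty) ⊆
      (Finset.univ : Finset (Fin s)).biUnion (fun i => insert (x i) (insert (y i) (nb G (y i) I))) := by
    intro a ha
    obtain ⟨haS, b, hb⟩ := Finset.mem_filter.1 ha
    obtain ⟨hbS, hab⟩ := mem_nb.1 hb
    simp only [Finset.mem_biUnion, Finset.mem_univ, true_and, Finset.mem_insert]
    by_cases hx : ∃ i, x i = a
    · obtain ⟨i, rfl⟩ := hx; exact ⟨i, Or.inl rfl⟩
    by_cases hy : ∃ i, y i = a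
    · obtain ⟨i, rfl⟩ := hy; exact ⟨i, Or.inr (Or.inl rfl)⟩
    push Not at hx hy
    have haI : a ∈ I := (hIm a).2 ⟨haS, hx, hy⟩
    have hbI : b ∉ I := fun hbI => hind a haI b hbI hab
    by_cases hx' : ∃ i, x i = b
    · obtain ⟨i, rfl⟩ := hx'; exact ⟨i, Or.inr (Or.inr (hsub i (mem_nb.2 ⟨haI, hab.symm⟩)))⟩
    by_cases hy' : ∃ i, y i = b
    · obtain ⟨i, rfl⟩ := hy'; exact ⟨i, Or.inr (Or.inr (mem_nb.2 ⟨haI, hab.symm⟩))⟩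
    push Not at hx' hy'
    exact absurd ((hIm b).2 ⟨hbS, hx', hy'⟩) hbI
  refine (Finset.card_le_card key).trans ?_
  refine (Finset.card_biUnion_le_card_mul _ _ m ?_).trans ?_
  · intro i _
    have hlt : (nb G (y i) I).card < (nb G (y i) S).card := by
      apply Finset.card_lt_card
      refine ⟨nb_mono hIS, fun hh => ?_⟩
      have : x i ∈ nb G (y i) I := hh (mem_nb.2 ⟨h4 i, (h6 i).symm⟩)
      exact ((hIm _).1 (mem_nb.1 this).1).2.1 i rfl
    have := hdeg _ (h5 i)
    have a1 := Finset.card_insert_le (x i) (insert (y i) (nb G (y i) I))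
    have a2 := Finset.card_insert_le (y i) (nb G (y i) I)
    omega
  · rw [Finset.card_univ, Fintype.card_fin]
    exact Nat.mul_le_mul_right _ (by omega)
end

section
open scoped Classical

lemma nb_inter_sdiff {W : Type*} {G : SimpleGraph W} {u a : W} {Z M : Finset W} :
    (nb G u Z).card + (nb G a Z).card ≤ (nb G a (nb G u (Z \ M))).card + Z.card + M.card := by
  have h1 := nb_inter_card (G := G) (u := a) (v := u) (Z := Z)
  have h2 : nb G a (nb G u Z) ⊆ nb G a (nb G u (Z \ M)) ∪ M := by
    intro w hw
    simp only [mem_nb, Finset.mem_union, Finset.mem_sdiff] at hw ⊢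
    tauto
  have h3 := (Finset.card_le_card h2).trans (Finset.card_union_le _ _)
  omega

lemma nb_split {W : Type*} [Fintype W] {G : SimpleGraph W} {u : W} (A : Finset W) :
    (nb G u Finset.univ).card = (nb G u A).card + (nb G u (Finset.univ \ A)).card := by
  rw [← nb_union_card Finset.disjoint_sdiff]
  congr 2
  exact (Finset.union_sdiff_of_subset (Finset.subset_univ A)).symm

lemma star_A {W : Type*} [Fintype W] {G : SimpleGraph W} {m n : ℕ} (hm : 2 ≤ m)
    (hn : 9 * m ≤ n + 8)
    (hcard : Fintype.card W = 2 * n - 1) (hdeg : ∀ v, n ≤ (nb G v Finset.univ).card)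
    (hno : ¬ Contains G (fan m)) :
    ∃ A : Finset W, (∀ u ∈ A, (nb G u A).card ≤ m - 1) ∧
      ∀ u ∈ Finset.univ \ A, (nb G u (Finset.univ \ A)).card ≤ m - 1 := by
  have : Nonempty W := Fintype.card_pos_iff.1 (by omega)
  obtain ⟨v⟩ := this
  obtain ⟨S, hSv, hSc⟩ := Finset.exists_subset_card_eq (hdeg v)
  have hSm : ¬ HasM G S m := fun h => hno (fan_of_hasM (v := v)
    (fun z hz => (mem_nb.1 (hSv hz)).2) h)
  obtain ⟨s, hs, X, Y, I, F, Yl, -, -, hIc, -, -, hIS, -, -, -, hind, -⟩ := match_lemma' hSm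
  have hT0 : (Finset.univ \ S).card = n - 1 := by
    have := Finset.card_sdiff_add_card_eq_card (Finset.subset_univ S)
    rw [Finset.card_univ] at this; omega
  have hR : (S \ I).card = 2 * s := by
    have := Finset.card_sdiff_add_card_eq_card hIS; omega
  have hsp : ∀ u, n ≤ (nb G u I).card + 2 * s + (nb G u (Finset.univ \ S)).card := by
    intro u
    have h1 := nb_split (G := G) (u := u) S
    have h2 : nb G u S ⊆ nb G u I ∪ (S \ I) := by
      intro w hw
      simp only [mem_nb, Finset.mem_union, Finset.mem_sdiff] at hw ⊢
      tauto
    have h3 := (Finset.card_le_card h2).trans (Finset.card_union_le _ _)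
    have := hdeg u
    omega
  have hI0 : ∀ w ∈ I, (nb G w I).card = 0 := by
    intro w hw
    rw [Finset.card_eq_zero, Finset.eq_empty_iff_forall_notMem]
    intro a ha
    exact hind w hw a (mem_nb.1 ha).1 (mem_nb.1 ha).2
  have hQ : ∀ u, m ≤ (nb G u I).card → (nb G u (Finset.univ \ S)).card ≤ 2 * s + m - 2 := by
    intro u hu
    by_contra hlt
    apply hno
    refine fan_of_cross (u := u) (A := nb G u I) (Z := Finset.univ \ S)
      (fun a ha => (mem_nb.1 ha).2) hu ?_ ?_
    · refine Finset.disjoint_of_subset_left (nb_subset.trans hIS) Finset.disjoint_sdiff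
    · intro a ha
      have haI := (mem_nb.1 ha).1
      have := nb_inter_card (G := G) (u := a) (v := u) (Z := Finset.univ \ S)
      have h1 := hsp a
      have h2 := hI0 a haI
      omega
  refine ⟨Finset.univ.filter (fun u => (nb G u I).card < m), ?_, ?_⟩
  · intro u hu
    by_contra hlt
    obtain ⟨A, hA, hAc⟩ := Finset.exists_subset_card_eq (show m ≤ _ by omega : m ≤
      (nb G u (Finset.univ.filter (fun u => (nb G u I).card < m))).card)
    apply hno
    refine fan_of_cross (u := u) (A := A) (Z := (Finset.univ \ S) \ A)
      (fun a ha => (mem_nb.1 (hA ha)).2) hAc.ge Finset.disjoint_sdiff ?_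
    intro a ha
    have ha' := (Finset.mem_filter.1 (mem_nb.1 (hA ha)).1).2
    have hu' := (Finset.mem_filter.1 hu).2
    have := nb_inter_sdiff (G := G) (u := u) (a := a) (Z := Finset.univ \ S) (M := A)
    have h1 := hsp a
    have h2 := hsp u
    omega
  · intro u hu
    by_contra hlt
    apply hno
    have hmem : ∀ a, a ∈ Finset.univ \ Finset.univ.filter (fun u => (nb G u I).card < m) →
        m ≤ (nb G a I).card := by
      intro a ha
      simp only [Finset.mem_sdiff, Finset.mem_filter, Finset.mem_univ, true_and, not_lt] at ha
      exact ha
    refine fan_of_cross (u := u) (A := nb G u (Finset.univ \ Finset.univ.filter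
      (fun u => (nb G u I).card < m))) (Z := I)
      (fun a ha => (mem_nb.1 ha).2) (by omega) ?_ ?_
    · rw [Finset.disjoint_left]
      intro a ha haI
      have := hmem a (mem_nb.1 ha).1
      have := hI0 a haI
      omega
    · intro a ha
      have h1 := hmem a (mem_nb.1 ha).1
      have h2 := hmem u hu
      have h3 := hQ a h1
      have h4 := hQ u h2
      have h5 := hsp a
      have h6 := hsp u
      have := nb_inter_card (G := G) (u := a) (v := u) (Z := I)
      omega

lemma star_B {W : Type*} [Fintype W] {G : SimpleGraph W} {m n : ℕ} (hm : 5 ≤ m)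
    (hn : m * m + 1 ≤ n + m)
    (hcard : Fintype.card W = 2 * n - 1) (hdeg : ∀ v, n ≤ (nb G v Finset.univ).card)
    (hno : ¬ Contains G (fan m)) (A : Finset W) (hAn : n ≤ A.card)
    (hA : ∀ u ∈ A, (nb G u A).card ≤ m - 1)
    (hB : ∀ u ∈ Finset.univ \ A, (nb G u (Finset.univ \ A)).card ≤ m - 1) : False := by
  have hn4 : 4 * m ≤ n + 3 := by nlinarith
  have hBc : (Finset.univ \ A).card + A.card = 2 * n - 1 := by
    have := Finset.card_sdiff_add_card_eq_card (Finset.subset_univ A)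
    rw [Finset.card_univ] at this; omega
  have hsp : ∀ u, n ≤ (nb G u A).card + (nb G u (Finset.univ \ A)).card := fun u => by
    rw [← nb_split]; exact hdeg u
  obtain ⟨a0, ha0⟩ : A.Nonempty := Finset.card_pos.1 (by omega)
  have hBpos : n + 1 ≤ (Finset.univ \ A).card + m := by
    have h1 := hsp a0
    have h2 := hA a0 ha0
    have := nb_card_le (G := G) (v := a0) (Z := Finset.univ \ A)
    omega
  obtain ⟨z, hz⟩ : (Finset.univ \ A).Nonempty := Finset.card_pos.1 (by omega)
  obtain ⟨δ, hδ⟩ : ∃ δ, δ = (nb G z (Finset.univ \ A)).card := ⟨_, rfl⟩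
  obtain ⟨i, hi⟩ : ∃ i, A.card = n + i := ⟨A.card - n, by omega⟩
  have hδm : δ ≤ m - 1 := hδ ▸ hB z hz
  have hz' := hsp z
  have hnoM : ¬ HasM G (nb G z A) (m - 1 - δ + 1) := by
    intro hM
    obtain ⟨M, hMs, hMc, hM⟩ := hM.support
    have hcr : HasM G (nb G z (Finset.univ \ A) ∪ nb G z (A \ M)) δ := by
      rw [hδ]
      apply HasM.cross
      · exact Finset.disjoint_of_subset_left nb_subset (Finset.disjoint_of_subset_right
          (nb_subset.trans Finset.sdiff_subset) Finset.sdiff_disjoint)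
      · intro d hd
        have h1 := nb_inter_sdiff (G := G) (u := z) (a := d) (Z := A) (M := M)
        have h2 := hsp d
        have h3 := hB d (mem_nb.1 hd).1
        omega
    have hall := hM.add hcr (by
      rw [Finset.disjoint_left]
      intro w hw hw'
      have h1 := (mem_nb.1 (hMs hw)).1
      rcases Finset.mem_union.1 hw' with h | h
      · exact (Finset.mem_sdiff.1 (mem_nb.1 h).1).2 h1
      · exact (Finset.mem_sdiff.1 (mem_nb.1 h).1).2 hw)
    have hmm : m - 1 - δ + 1 + δ = m := by omega
    rw [hmm] at hall
    refine hno (fan_of_hasM (v := z) ?_ hall)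
    intro w hw
    simp only [Finset.mem_union] at hw
    rcases hw with hw | hw | hw
    · exact (mem_nb.1 (hMs hw)).2
    · exact (mem_nb.1 hw).2
    · exact (mem_nb.1 hw).2
  have hcov := star_cover (by omega) (fun v hv => (nb_card_mono nb_subset).trans
    (hA v (nb_subset hv))) hnoM
  have hfil := Finset.card_filter_add_card_filter_not (s := nb G z A)
    (fun v => (nb G v (nb G z A)).Nonempty)
  obtain ⟨Iso, hIso⟩ : ∃ J, J = (nb G z A).filter (fun v => ¬ (nb G v (nb G z A)).Nonempty) :=
    ⟨_, rfl⟩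
  rw [← hIso] at hfil
  have hIc : 1 + (m - 1) * δ ≤ Iso.card := by
    obtain ⟨q, hq⟩ : ∃ q, m - 1 = δ + q := ⟨m - 1 - δ, by omega⟩
    have e1 : m - 1 - δ = q := by omega
    have e2 : m = δ + q + 1 := by omega
    rw [e1] at hcov
    rw [hq]
    subst e2
    nlinarith
  have hMis : (A \ nb G z A).card ≤ i + δ := by
    have := Finset.card_sdiff_add_card_eq_card (nb_subset (G := G) (v := z) (Z := A))
    omega
  have hIm : ∀ a ∈ Iso, i + 1 ≤ (nb G a (A \ nb G z A)).card := by
    intro a ha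
    rw [hIso, Finset.mem_filter] at ha
    have h1 := hsp a
    have h2 := nb_card_le (G := G) (v := a) (Z := Finset.univ \ A)
    have h3 : nb G a A ⊆ nb G a (nb G z A) ∪ nb G a (A \ nb G z A) := by
      intro w hw
      simp only [mem_nb, Finset.mem_union, Finset.mem_sdiff] at hw ⊢
      tauto
    have h4 := (Finset.card_le_card h3).trans (Finset.card_union_le _ _)
    have h5 : (nb G a (nb G z A)).card = 0 := by
      rw [Finset.card_eq_zero]; exact Finset.not_nonempty_iff_eq_empty.1 ha.2
    omega
  rcases Nat.eq_zero_or_pos δ with h0 | hpos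
  · obtain ⟨a, ha⟩ : Iso.Nonempty := Finset.card_pos.1 (by omega)
    have h1 := hIm a ha
    have h2 := nb_card_le (G := G) (v := a) (Z := A \ nb G z A)
    omega
  · have h1 : Iso.card * (i + 1) ≤ ∑ a ∈ Iso, (nb G a (A \ nb G z A)).card :=
      Finset.card_nsmul_le_sum _ _ _ hIm
    rw [nb_comm_card] at h1
    have h2 : ∑ b ∈ A \ nb G z A, (nb G b Iso).card ≤ (A \ nb G z A).card * (m - 1) := by
      apply Finset.sum_le_card_nsmul
      intro b hb
      refine (nb_card_mono ?_).trans (hA b (Finset.mem_sdiff.1 hb).1)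
      rw [hIso]; exact (Finset.filter_subset _ _).trans nb_subset
    have h3 : (1 + (m - 1) * δ) * (i + 1) ≤ (i + δ) * (m - 1) :=
      (Nat.mul_le_mul_right _ hIc).trans (h1.trans (h2.trans (Nat.mul_le_mul_right _ hMis)))
    obtain ⟨q, hq⟩ : ∃ q, q = m - 1 := ⟨_, rfl⟩
    rw [← hq] at h3
    have h4 : q * i ≤ q * i * δ := Nat.le_mul_of_pos_right _ hpos
    nlinarith

lemma star_theorem {W : Type*} [Fintype W] {G : SimpleGraph W} {m n : ℕ} (hm : 9 ≤ m)
    (hn : m * m + 1 ≤ n + m)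
    (hcard : Fintype.card W = 2 * n - 1) (hno : ¬ Contains G (fan m)) :
    ∃ z, (nb G z Finset.univ).card < n := by
  by_contra hdeg
  push Not at hdeg
  obtain ⟨A, hA, hB⟩ := star_A (by omega) (by nlinarith) hcard hdeg hno
  by_cases hAn : n ≤ A.card
  · exact star_B (by omega) hn hcard hdeg hno A hAn hA hB
  · refine star_B (by omega) hn hcard hdeg hno (Finset.univ \ A) ?_ hB ?_
    · have := Finset.card_sdiff_add_card_eq_card (Finset.subset_univ A)
      rw [Finset.card_univ] at this; omega
    · simpa using hA
end

section
open scoped Classical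

/-- rooted tree data -/
structure RT {V : Type*} (T : SimpleGraph V) (r : V) (par : V → V) (dep : V → ℕ) : Prop where
  adj : ∀ v, v ≠ r → T.Adj v (par v)
  dep : ∀ v, v ≠ r → dep v = dep (par v) + 1
  edge : ∀ u v, T.Adj u v → (u ≠ r ∧ par u = v) ∨ (v ≠ r ∧ par v = u)

lemma exists_RT {V : Type*} [Fintype V] {T : SimpleGraph V} (hT : T.IsTree) (r : V) :
    ∃ par dep, RT T r par dep := by
  have hpar : ∀ v, ∃ u, v ≠ r → T.Adj v u ∧ T.dist r v = T.dist r u + 1 := by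
    intro v
    by_cases hv : v = r
    · exact ⟨v, fun h => absurd hv h⟩
    obtain ⟨p, hp⟩ := hT.connected.exists_walk_length_eq_dist v r
    cases p with
    | nil => exact absurd rfl hv
    | @cons _ u _ h q =>
      refine ⟨u, fun _ => ⟨h, ?_⟩⟩
      rw [SimpleGraph.Walk.length_cons] at hp
      have h1 : T.dist u r ≤ q.length := SimpleGraph.dist_le q
      have h2 : T.dist v r ≤ T.dist v u + T.dist u r := hT.connected.dist_triangle
      have h3 : T.dist v u = 1 := SimpleGraph.dist_eq_one_iff_adj.2 h
      rw [SimpleGraph.dist_comm (u := r) (v := v), SimpleGraph.dist_comm (u := r) (v := u)]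
      omega
  choose par hpar using hpar
  refine ⟨par, T.dist r, fun v hv => (hpar v hv).1, fun v hv => (hpar v hv).2, ?_⟩
  have hinj : Set.InjOn (fun v => s(v, par v)) ((Finset.univ.erase r : Finset V) : Set V) := by
    intro v hv w hw h
    have hv' : v ≠ r := by simpa using hv
    have hw' : w ≠ r := by simpa using hw
    rcases Sym2.eq_iff.1 h with ⟨h, _⟩ | ⟨h1, h2⟩
    · exact h
    · have a := (hpar v hv').2
      have b := (hpar w hw').2
      rw [h2] at a; rw [← h1] at b
      omega
  have himg : (Finset.univ.erase r).image (fun v => s(v, par v)) = T.edgeFinset := by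
    apply Finset.eq_of_subset_of_card_le
    · intro e he
      obtain ⟨v, hv, rfl⟩ := Finset.mem_image.1 he
      rw [SimpleGraph.mem_edgeFinset, SimpleGraph.mem_edgeSet]
      exact (hpar v (Finset.ne_of_mem_erase hv)).1
    · rw [Finset.card_image_of_injOn hinj, Finset.card_erase_of_mem (Finset.mem_univ _),
        Finset.card_univ, ← hT.card_edgeFinset]
      simp
  intro u v huv
  have : s(u, v) ∈ T.edgeFinset := by
    rw [SimpleGraph.mem_edgeFinset, SimpleGraph.mem_edgeSet]; exact huv
  rw [← himg] at this
  obtain ⟨w, hw, h⟩ := Finset.mem_image.1 this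
  have hw' := Finset.ne_of_mem_erase hw
  rcases Sym2.eq_iff.1 h with ⟨h1, h2⟩ | ⟨h1, h2⟩
  · left; exact h1 ▸ ⟨hw', h2⟩
  · right; exact h1 ▸ ⟨hw', h2⟩

/-- children -/
noncomputable def ch {V : Type*} [Fintype V] (r : V) (par : V → V) (v : V) : Finset V :=
  Finset.univ.filter (fun u => u ≠ r ∧ par u = v)

lemma mem_ch {V : Type*} [Fintype V] {r : V} {par : V → V} {u v : V} :
    u ∈ ch r par v ↔ u ≠ r ∧ par u = v := by simp [ch]

lemma sum_ch {V : Type*} [Fintype V] {r : V} {par : V → V} (A : Finset V) :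
    ∑ v ∈ A, (ch r par v).card = (Finset.univ.filter (fun u => u ≠ r ∧ par u ∈ A)).card := by
  rw [Finset.card_eq_sum_card_fiberwise (f := par) (t := A)]
  · refine Finset.sum_congr rfl fun v hv => ?_
    congr 1
    ext u
    simp only [mem_ch, Finset.mem_filter, Finset.mem_univ, true_and]
    constructor
    · rintro ⟨h1, h2⟩; exact ⟨⟨h1, h2 ▸ hv⟩, h2⟩
    · rintro ⟨⟨h1, h2⟩, h3⟩; exact ⟨h1, h3⟩
  · intro u hu
    simpa using (Finset.mem_filter.1 (Finset.mem_coe.1 hu)).2.2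

lemma sum_ch_univ {V : Type*} [Fintype V] {r : V} {par : V → V} :
    ∑ v, (ch r par v).card + 1 = Fintype.card V := by
  rw [sum_ch, ← Finset.card_univ, ← Finset.card_erase_add_one (Finset.mem_univ r)]
  congr 2
  ext u; simp

section
set_option linter.unusedSectionVars false
variable {V : Type*} [Fintype V] {T : SimpleGraph V} {r : V} {par : V → V} {dep : V → ℕ}

lemma RT.nb_subset (h : RT T r par dep) (v : V) :
    nb T v Finset.univ ⊆ insert (par v) (ch r par v) := by
  intro u hu
  rcases h.edge v u (mem_nb.1 hu).2 with ⟨_, h2⟩ | h2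
  · simp [h2]
  · exact Finset.mem_insert_of_mem (mem_ch.2 h2)

lemma RT.deg_le (h : RT T r par dep) (v : V) :
    (nb T v Finset.univ).card ≤ (ch r par v).card + 1 :=
  (Finset.card_le_card (h.nb_subset v)).trans (Finset.card_insert_le _ _)

lemma RT.deg_root (h : RT T r par dep) :
    (nb T r Finset.univ).card ≤ (ch r par r).card := by
  apply Finset.card_le_card
  intro u hu
  rcases h.edge r u (mem_nb.1 hu).2 with ⟨h1, h2⟩ | h2
  · exact absurd rfl h1
  · exact mem_ch.2 h2

lemma RT.parity (h : RT T r par dep) {u v : V} (huv : T.Adj u v) : dep u % 2 ≠ dep v % 2 := by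
  rcases h.edge u v huv with ⟨h1, h2⟩ | ⟨h1, h2⟩
  · have := h.dep u h1; rw [h2] at this; omega
  · have := h.dep v h1; rw [h2] at this; omega

lemma RT.sum_deg (h : RT T r par dep) (A : Finset V) (hA : ∀ u ∈ A, ∀ v ∈ A, ¬ T.Adj u v) :
    ∑ v ∈ A, (nb T v Finset.univ).card + 1 ≤ Fintype.card V := by
  have h1 : ∀ v ∈ A, (nb T v Finset.univ).card ≤ (ch r par v).card + (if v ≠ r then 1 else 0) := by
    intro v _
    split_ifs with hv
    · exact h.deg_le v
    · push Not at hv; subst hv; exact h.deg_root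
  have h2 := Finset.sum_le_sum h1
  rw [Finset.sum_add_distrib, sum_ch, ← Finset.card_filter] at h2
  have h3 : Disjoint (Finset.univ.filter (fun u => u ≠ r ∧ par u ∈ A)) (A.filter (fun v => v ≠ r)) := by
    rw [Finset.disjoint_left]
    intro u hu hu'
    simp only [Finset.mem_filter, Finset.mem_univ, true_and] at hu hu'
    exact hA u hu'.1 _ hu.2 (h.adj u hu.1)
  rw [← Finset.card_union_of_disjoint h3] at h2
  have h4 : (Finset.univ.filter (fun u => u ≠ r ∧ par u ∈ A)) ∪ (A.filter (fun v => v ≠ r)) ⊆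
      Finset.univ.erase r := by
    intro u hu
    simp only [Finset.mem_union, Finset.mem_filter, Finset.mem_univ, true_and] at hu
    simp only [Finset.mem_erase, Finset.mem_univ, and_true]
    tauto
  have h5 := Finset.card_le_card h4
  have h6 := Finset.card_erase_add_one (Finset.mem_univ r)
  rw [Finset.card_univ] at h6
  omega

lemma RT.ext (h : RT T r par dep) {W : Type*} {H : SimpleGraph W} (C1 : Finset V)
    (h1 : ∀ v ∈ C1, v ≠ r → par v ∈ C1) :
    ∀ (k : ℕ) (C : Finset V) (Z : Finset W) (f : V → W), C ⊆ C1 → r ∈ C →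
    (∀ v ∈ C, v ≠ r → par v ∈ C) → (C1 \ C).card = k →
    Set.InjOn f C → (∀ v ∈ C, v ≠ r → H.Adj (f v) (f (par v))) → (∀ v ∈ C, f v ∉ Z) →
    (∀ v ∈ C, (∃ u ∈ C1 \ C, par u = v) → k ≤ (nb H (f v) Z).card) →
    (∀ v ∈ C1 \ C, (∃ u ∈ C1 \ C, par u = v) → ∀ w ∈ Z, k ≤ (nb H w Z).card + 1) →
    ∃ f' : V → W, (∀ v ∈ C, f' v = f v) ∧ Set.InjOn f' C1 ∧ (∀ v ∈ C1 \ C, f' v ∈ Z) ∧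
      (∀ v ∈ C1, v ≠ r → H.Adj (f' v) (f' (par v))) := by
  intro k
  induction k with
  | zero =>
    intro C Z f hC hr hcl hk hinj hadj hZ ha hb
    have : C1 = C := by
      apply Finset.Subset.antisymm _ hC
      rw [← Finset.sdiff_eq_empty_iff_subset]; exact Finset.card_eq_zero.1 hk
    subst this
    exact ⟨f, fun _ _ => rfl, hinj, by simp, hadj⟩
  | succ k ih =>
    intro C Z f hC hr hcl hk hinj hadj hZ ha hb
    obtain ⟨v, hv, hmin⟩ := Finset.exists_min_image (C1 \ C) dep (Finset.card_pos.1 (by omega))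
    have hvC := (Finset.mem_sdiff.1 hv).2
    have hv1 := (Finset.mem_sdiff.1 hv).1
    have hvr : v ≠ r := fun h => hvC (h ▸ hr)
    have hpC : par v ∈ C := by
      by_contra hp
      have := hmin (par v) (Finset.mem_sdiff.2 ⟨h1 v hv1 hvr, hp⟩)
      have := h.dep v hvr
      omega
    have hcard := ha (par v) hpC ⟨v, hv, rfl⟩
    obtain ⟨w, hw⟩ : (nb H (f (par v)) Z).Nonempty := Finset.card_pos.1 (by omega)
    obtain ⟨hwZ, hwadj⟩ := mem_nb.1 hw
    have hne : ∀ u ∈ C, u ≠ v := fun u hu huv => hvC (huv ▸ hu)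
    have hup : ∀ u ∈ C, Function.update f v w u = f u := fun u hu =>
      Function.update_of_ne (hne u hu) _ _
    have hsub : C1 \ insert v C ⊆ C1 \ C := Finset.sdiff_subset_sdiff (Finset.Subset.refl _)
      (Finset.subset_insert _ _)
    have hnbe : ∀ q, (nb H q Z).card ≤ (nb H q (Z.erase w)).card + 1 := by
      intro q
      have := nb_sdiff_card (G := H) (v := q) (Z := Z) (Z' := {w})
      rwa [Finset.sdiff_singleton_eq_erase, Finset.card_singleton] at this
    obtain ⟨f', g1, g2, g3, g4⟩ := ih (insert v C) (Z.erase w) (Function.update f v w)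
      (Finset.insert_subset hv1 hC) (Finset.mem_insert_of_mem hr)
      (by
        intro u hu hur
        rcases Finset.mem_insert.1 hu with rfl | hu
        · exact Finset.mem_insert_of_mem hpC
        · exact Finset.mem_insert_of_mem (hcl u hu hur))
      (by
        have he : C1 \ insert v C = (C1 \ C).erase v := by
          ext u; simp only [Finset.mem_sdiff, Finset.mem_insert, Finset.mem_erase]; tauto
        rw [he, Finset.card_erase_of_mem hv]; omega)
      (by
        intro a hac b hbc hab
        rcases Finset.mem_insert.1 (Finset.mem_coe.1 hac) with rfl | ha'
        · rcases Finset.mem_insert.1 (Finset.mem_coe.1 hbc) with rfl | hb'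
          · rfl
          · rw [hup b hb', Function.update_self] at hab
            exact absurd (hab ▸ hwZ) (hZ b hb')
        · rcases Finset.mem_insert.1 (Finset.mem_coe.1 hbc) with rfl | hb'
          · rw [hup a ha', Function.update_self] at hab
            exact absurd (hab ▸ hwZ) (hZ a ha')
          · rw [hup a ha', hup b hb'] at hab
            exact hinj ha' hb' hab)
      (by
        intro u hu hur
        rcases Finset.mem_insert.1 hu with rfl | hu
        · rw [Function.update_self, hup _ hpC]; exact hwadj.symm
        · rw [hup u hu, hup _ (hcl u hu hur)]; exact hadj u hu hur)
      (by
        intro u hu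
        rcases Finset.mem_insert.1 hu with rfl | hu
        · rw [Function.update_self]; exact Finset.notMem_erase _ _
        · rw [hup u hu]; exact fun hh => hZ u hu (Finset.mem_of_mem_erase hh))
      (by
        rintro u hu ⟨c, hc, hcu⟩
        rcases Finset.mem_insert.1 hu with rfl | hu
        · rw [Function.update_self]
          have := hb u hv ⟨c, hsub hc, hcu⟩ w hwZ
          rw [nb_erase]
          omega
        · rw [hup u hu]
          have := ha u hu ⟨c, hsub hc, hcu⟩
          have := hnbe (f u)
          omega)
      (by
        rintro u hu ⟨c, hc, hcu⟩ q hq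
        have := hb u (hsub hu) ⟨c, hsub hc, hcu⟩ q (Finset.mem_of_mem_erase hq)
        have := hnbe q
        omega)
    refine ⟨f', ?_, g2, ?_, g4⟩
    · intro u hu
      rw [g1 u (Finset.mem_insert_of_mem hu), hup u hu]
    · intro u hu
      by_cases huv : u = v
      · subst huv; rw [g1 u (Finset.mem_insert_self _ _), Function.update_self]; exact hwZ
      · refine Finset.mem_of_mem_erase (g3 u ?_)
        simp only [Finset.mem_sdiff, Finset.mem_insert, not_or] at hu ⊢
        exact ⟨hu.1, huv, hu.2⟩

lemma RT.contains (h : RT T r par dep) {W : Type*} {H : SimpleGraph W} (f : V → W)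
    (hinj : Function.Injective f) (hadj : ∀ v, v ≠ r → H.Adj (f v) (f (par v))) :
    Contains H T := by
  refine ⟨f, hinj, fun u v huv => ?_⟩
  rcases h.edge u v huv with ⟨h1, h2⟩ | ⟨h1, h2⟩
  · rw [← h2]; exact hadj u h1
  · rw [← h2]; exact (hadj v h1).symm
end
end

section
open scoped Classical

/-- neighbourhood of a set of tree vertices -/
noncomputable def NB {V : Type*} [Fintype V] (T : SimpleGraph V) (L : Finset V) : Finset V :=
  L.biUnion (fun v => nb T v Finset.univ)

lemma mem_NB {V : Type*} [Fintype V] {T : SimpleGraph V} {L : Finset V} {v : V} :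
    v ∈ NB T L ↔ ∃ u ∈ L, T.Adj u v := by
  simp [NB, mem_nb]

lemma NB_mono {V : Type*} [Fintype V] {T : SimpleGraph V} {L L' : Finset V} (h : L ⊆ L') :
    NB T L ⊆ NB T L' := Finset.biUnion_subset_biUnion_of_subset_left _ h

lemma NB_card {V : Type*} [Fintype V] {T : SimpleGraph V} {L : Finset V} :
    (NB T L).card ≤ ∑ v ∈ L, (nb T v Finset.univ).card := Finset.card_biUnion_le

lemma RT.exists_LX {V : Type*} [Fintype V] {T : SimpleGraph V} {r : V} {par : V → V}
    {dep : V → ℕ} (h : RT T r par dep) {m : ℕ} (hm : 2 ≤ m) (hn : 9 * m ≤ Fintype.card V + 8)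
    (E : Finset V) (hE : E.card ≤ 3 * (m - 1)) :
    ∃ LX : Finset V, Disjoint LX E ∧ LX.card = m - 1 ∧ (∀ u ∈ LX, ∀ v ∈ LX, ¬ T.Adj u v) ∧
      (NB T LX).card ≤ 4 * (m - 1) := by
  have key : ∀ b : ℕ, Fintype.card V ≤ 3 * (m - 1) +
      2 * ((Finset.univ \ E).filter (fun v => dep v % 2 = b)).card →
      ∃ LX : Finset V, Disjoint LX E ∧ LX.card = m - 1 ∧ (∀ u ∈ LX, ∀ v ∈ LX, ¬ T.Adj u v) ∧
      (NB T LX).card ≤ 4 * (m - 1) := by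
    intro b hb
    obtain ⟨A, hA⟩ : ∃ A, A = (Finset.univ \ E).filter (fun v => dep v % 2 = b) := ⟨_, rfl⟩
    rw [← hA] at hb
    have hind : ∀ u ∈ A, ∀ v ∈ A, ¬ T.Adj u v := by
      intro u hu v hv huv
      rw [hA, Finset.mem_filter] at hu hv
      exact h.parity huv (hu.2.trans hv.2.symm)
    have hsum := h.sum_deg A hind
    have hsp := Finset.card_filter_add_card_filter_not (s := A)
      (fun v => (nb T v Finset.univ).card ≤ 4)
    have hbad : (A.filter (fun v => ¬ (nb T v Finset.univ).card ≤ 4)).card * 5 ≤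
        ∑ v ∈ A, (nb T v Finset.univ).card := by
      refine le_trans ?_ (Finset.sum_le_sum_of_subset
        (Finset.filter_subset (fun v => ¬ (nb T v Finset.univ).card ≤ 4) A))
      rw [← smul_eq_mul]
      apply Finset.card_nsmul_le_sum
      intro v hv
      have := (Finset.mem_filter.1 hv).2
      omega
    obtain ⟨LX, hL, hLc⟩ := Finset.exists_subset_card_eq (show m - 1 ≤
      (A.filter (fun v => (nb T v Finset.univ).card ≤ 4)).card by omega)
    have hLA := hL.trans (Finset.filter_subset _ _)
    refine ⟨LX, ?_, hLc, fun u hu v hv => hind u (hLA hu) v (hLA hv), ?_⟩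
    · refine Finset.disjoint_of_subset_left hLA ?_
      rw [hA]
      exact Finset.disjoint_of_subset_left (Finset.filter_subset _ _) Finset.sdiff_disjoint
    · refine NB_card.trans ?_
      rw [← hLc, mul_comm]
      rw [← smul_eq_mul]
      apply Finset.sum_le_card_nsmul
      intro v hv
      exact (Finset.mem_filter.1 (hL hv)).2
  have hsp := Finset.card_filter_add_card_filter_not (s := Finset.univ \ E)
      (fun v => dep v % 2 = 0)
  have he : (Finset.univ \ E).filter (fun v => ¬ dep v % 2 = 0) =
      (Finset.univ \ E).filter (fun v => dep v % 2 = 1) := by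
    apply Finset.filter_congr
    intro v _
    omega
  rw [he] at hsp
  have hc := Finset.card_sdiff_add_card_eq_card (Finset.subset_univ E)
  rw [Finset.card_univ] at hc
  by_cases h0 : Fintype.card V ≤ 3 * (m - 1) +
      2 * ((Finset.univ \ E).filter (fun v => dep v % 2 = 0)).card
  · exact key 0 h0
  · exact key 1 (by omega)

lemma exists_injOn {V W : Type*} [Nonempty W] (A : Finset V) (B : Finset W) (h : A.card ≤ B.card) :
    ∃ g : V → W, Set.InjOn g A ∧ ∀ v ∈ A, g v ∈ B := by
  obtain ⟨f, hf, hft⟩ := hall_greedy (fun _ : A => B) (fun s hs => by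
    obtain ⟨x, hx⟩ := hs
    refine ⟨x, hx, ?_⟩
    have : s.card ≤ A.card := by simpa using Finset.card_le_univ s
    exact this.trans h)
  refine ⟨fun v => if hv : v ∈ A then f ⟨v, hv⟩ else Classical.arbitrary W, ?_, ?_⟩
  · intro a ha b hb hab
    have ha' : a ∈ A := ha
    have hb' : b ∈ A := hb
    simp only [ha', hb', dif_pos] at hab
    exact congrArg Subtype.val (hf hab)
  · intro v hv
    simp only [hv, dif_pos]
    exact hft _

lemma core {V W : Type*} [Fintype V] [Nonempty W] {T : SimpleGraph V} {r : V} {par : V → V}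
    {dep : V → ℕ} (h : RT T r par dep) {G : SimpleGraph W}
    (D P LX LY : Finset V) (hrD : r ∉ D) (hDcl : ∀ v, v ≠ r → par v ∈ D → v ∈ D)
    (hP : ∀ v ∈ D, par v ∈ D ∨ par v ∈ P)
    (hXD : Disjoint LX D) (hYD : Disjoint LY D) (hXP : Disjoint LX P) (hYP : Disjoint LY P)
    (hind : ∀ u ∈ LX ∪ LY, ∀ v ∈ LX ∪ LY, ¬ T.Adj u v)
    (hLYP : ∀ u ∈ LY, ∀ p ∈ P, ¬ T.Adj u p)
    (h2 : ∀ v, (nb T v LY).card ≤ 2)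
    (I X Y U F K : Finset W) (t : ℕ)
    (dIX : Disjoint I X) (dIY : Disjoint I Y) (dIU : Disjoint I U) (dXY : Disjoint X Y)
    (dXU : Disjoint X U) (dYU : Disjoint Y U) (dLXY : Disjoint LX LY)
    (hI : ∀ a ∈ I, ∀ b ∈ I, ¬ G.Adj a b) (hX : ∀ x ∈ X, ∀ a ∈ I \ F, ¬ G.Adj x a)
    (hY : ∀ y ∈ Y, (nb G y I).card ≤ t) (hKI : K ⊆ I) (hPK : P.card ≤ (K \ F).card)
    (hKU : ∀ a ∈ K, D.card ≤ (nb Gᶜ a U).card) (hUU : ∀ u ∈ U, D.card ≤ (nb Gᶜ u U).card)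
    (cX : LX.card ≤ X.card) (cY : LY.card ≤ Y.card)
    (hsum : Fintype.card V ≤ I.card + LX.card + LY.card + D.card)
    (hh1 : (NB T LY).card + P.card + 2 * t + F.card ≤ I.card)
    (hh2 : (NB T LX).card + (NB T LY).card + P.card + F.card ≤ I.card) :
    Contains Gᶜ T := by
  obtain ⟨gX, gXi, gXm⟩ := exists_injOn LX X cX
  obtain ⟨gY, gYi, gYm⟩ := exists_injOn LY Y cY
  obtain ⟨bad, hbad⟩ : ∃ bad : V → Finset W,
    bad = fun v => (nb T v LY).biUnion (fun y => nb G (gY y) I) := ⟨_, rfl⟩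
  have hbadc : ∀ v, (bad v).card ≤ 2 * t := by
    intro v
    rw [hbad]
    refine (Finset.card_biUnion_le_card_mul _ _ t ?_).trans (Nat.mul_le_mul_right _ (h2 v))
    intro y hy
    exact hY _ (gYm y (mem_nb.1 hy).1)
  obtain ⟨ta, hta⟩ : ∃ ta : V → Finset W, ta = fun v => if v ∈ P then K \ F else
    if v ∈ NB T LY then (I \ F) \ bad v else if v ∈ NB T LX then I \ F else I := ⟨_, rfl⟩
  have hIF : I.card ≤ (I \ F).card + F.card := by
    have := Finset.le_card_sdiff F I; omega
  have hall : ∃ f : {v : V // v ∉ D ∪ (LX ∪ LY)} → W, Function.Injective f ∧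
      ∀ x, f x ∈ ta x.1 := by
    apply hall_greedy (fun x : {v : V // v ∉ D ∪ (LX ∪ LY)} => ta x.1)
    intro s hs
    have hsc : s.card = (s.image Subtype.val).card :=
      (Finset.card_image_of_injective _ Subtype.val_injective).symm
    have hmem : ∀ v ∈ s.image Subtype.val, ∃ x ∈ s, x.1 = v := fun v hv => Finset.mem_image.1 hv
    by_cases c1 : s.image Subtype.val ⊆ P
    · obtain ⟨x, hx⟩ := hs
      refine ⟨x, hx, ?_⟩
      have hxP : x.1 ∈ P := c1 (Finset.mem_image_of_mem _ hx)
      rw [hta]; simp only [hxP, if_true]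
      have := Finset.card_le_card c1
      omega
    by_cases c2 : s.image Subtype.val ⊆ P ∪ NB T LY
    · obtain ⟨v, hv, hvP⟩ := Finset.not_subset.1 c1
      obtain ⟨x, hx, rfl⟩ := hmem v hv
      refine ⟨x, hx, ?_⟩
      have hxY : x.1 ∈ NB T LY := by
        have := c2 hv; rw [Finset.mem_union] at this; tauto
      rw [hta]; simp only [hvP, if_false, hxY, if_true]
      have a1 := (Finset.card_le_card c2).trans (Finset.card_union_le _ _)
      have a2 := hbadc x.1
      have a3 := Finset.le_card_sdiff (bad x.1) (I \ F)
      omega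
    by_cases c3 : s.image Subtype.val ⊆ (P ∪ NB T LY) ∪ NB T LX
    · obtain ⟨v, hv, hvP⟩ := Finset.not_subset.1 c2
      obtain ⟨x, hx, rfl⟩ := hmem v hv
      refine ⟨x, hx, ?_⟩
      rw [Finset.mem_union, not_or] at hvP
      have hxX : x.1 ∈ NB T LX := by
        have := c3 hv; rw [Finset.mem_union, Finset.mem_union] at this; tauto
      rw [hta]; simp only [hvP.1, hvP.2, if_false, hxX, if_true]
      have a1 := (Finset.card_le_card c3).trans (Finset.card_union_le _ _)
      have a2 := Finset.card_union_le P (NB T LY)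
      omega
    · obtain ⟨v, hv, hvP⟩ := Finset.not_subset.1 c3
      obtain ⟨x, hx, rfl⟩ := hmem v hv
      refine ⟨x, hx, ?_⟩
      simp only [Finset.mem_union, not_or] at hvP
      rw [hta]; simp only [hvP.1.1, hvP.1.2, if_false, hvP.2]
      have a1 : s.image Subtype.val ⊆ Finset.univ \ (D ∪ (LX ∪ LY)) := by
        intro w hw
        obtain ⟨y, hy, rfl⟩ := hmem w hw
        simpa using y.2
      have a2 := Finset.card_le_card a1
      have a3 := Finset.card_sdiff_add_card_eq_card (Finset.subset_univ (D ∪ (LX ∪ LY)))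
      rw [Finset.card_univ, Finset.card_union_of_disjoint (Finset.disjoint_union_right.2
        ⟨hXD.symm, hYD.symm⟩), Finset.card_union_of_disjoint dLXY] at a3
      omega
  obtain ⟨fa, faI, fam⟩ := hall
  have htaI : ∀ v, ta v ⊆ I := by
    intro v; rw [hta]; dsimp only
    split_ifs
    · exact Finset.sdiff_subset.trans hKI
    · exact Finset.sdiff_subset.trans Finset.sdiff_subset
    · exact Finset.sdiff_subset
    · exact Finset.Subset.refl _
  obtain ⟨f, hf⟩ : ∃ f : V → W, f = fun v => if hv : v ∉ D ∪ (LX ∪ LY) then fa ⟨v, hv⟩ else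
    if v ∈ LX then gX v else gY v := ⟨_, rfl⟩
  have fR : ∀ v (hv : v ∉ D ∪ (LX ∪ LY)), f v = fa ⟨v, hv⟩ := by
    intro v hv; rw [hf]; exact dif_pos hv
  have fRm : ∀ v, v ∉ D ∪ (LX ∪ LY) → f v ∈ ta v := by
    intro v hv; rw [fR v hv]; exact fam ⟨v, hv⟩
  have fRI : ∀ v, v ∉ D ∪ (LX ∪ LY) → f v ∈ I := fun v hv => htaI v (fRm v hv)
  have fX : ∀ v ∈ LX, f v = gX v := by
    intro v hv
    rw [hf]; simp [hv]
  have fY : ∀ v ∈ LY, f v = gY v := by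
    intro v hv
    have : v ∉ LX := Finset.disjoint_right.1 dLXY hv
    rw [hf]; simp [hv, this]
  have fXm : ∀ v ∈ LX, f v ∈ X := fun v hv => by rw [fX v hv]; exact gXm v hv
  have fYm : ∀ v ∈ LY, f v ∈ Y := fun v hv => by rw [fY v hv]; exact gYm v hv
  have tri : ∀ v, v ∉ D → v ∈ LX ∨ v ∈ LY ∨ v ∉ D ∪ (LX ∪ LY) := by
    intro v hv; simp only [Finset.mem_union, not_or]; tauto
  have ne_of : ∀ {A B : Finset W}, Disjoint A B → ∀ {a b : W}, a ∈ A → b ∈ B → a ≠ b :=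
    fun hd a b ha hb hab => Finset.disjoint_left.1 hd ha (hab ▸ hb)
  have finj : Set.InjOn f ((Finset.univ \ D : Finset V) : Set V) := by
    intro a ha b hb hab
    have ha' : a ∉ D := by simpa using ha
    have hb' : b ∉ D := by simpa using hb
    rcases tri a ha' with ha1 | ha1 | ha1 <;> rcases tri b hb' with hb1 | hb1 | hb1
    · rw [fX a ha1, fX b hb1] at hab; exact gXi ha1 hb1 hab
    · exact absurd hab (ne_of dXY (fXm a ha1) (fYm b hb1))
    · exact absurd hab.symm (ne_of dIX (fRI b hb1) (fXm a ha1))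
    · exact absurd hab.symm (ne_of dXY (fXm b hb1) (fYm a ha1))
    · rw [fY a ha1, fY b hb1] at hab; exact gYi ha1 hb1 hab
    · exact absurd hab.symm (ne_of dIY (fRI b hb1) (fYm a ha1))
    · exact absurd hab (ne_of dIX (fRI a ha1) (fXm b hb1))
    · exact absurd hab (ne_of dIY (fRI a ha1) (fYm b hb1))
    · rw [fR a ha1, fR b hb1] at hab
      exact congrArg Subtype.val (faI hab)
  have hnX : ∀ u v, u ∈ LX → v ∉ D → T.Adj u v → ¬ G.Adj (f u) (f v) := by
    intro u v hu hv huv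
    have hvN : v ∈ NB T LX := mem_NB.2 ⟨u, hu, huv⟩
    have hvR : v ∉ D ∪ (LX ∪ LY) := by
      rw [Finset.mem_union, not_or]
      exact ⟨hv, fun hv' => hind u (Finset.mem_union_left _ hu) v hv' huv⟩
    refine hX _ (fXm u hu) _ ?_
    have := fRm v hvR
    rw [hta] at this; dsimp only at this
    split_ifs at this
    · exact Finset.sdiff_subset_sdiff hKI (Finset.Subset.refl _) this
    · exact Finset.sdiff_subset this
    · exact this
  have hnY : ∀ u v, u ∈ LY → v ∉ D → T.Adj u v → ¬ G.Adj (f u) (f v) := by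
    intro u v hu hv huv hG
    have hvN : v ∈ NB T LY := mem_NB.2 ⟨u, hu, huv⟩
    have hvR : v ∉ D ∪ (LX ∪ LY) := by
      rw [Finset.mem_union, not_or]
      exact ⟨hv, fun hv' => hind u (Finset.mem_union_right _ hu) v hv' huv⟩
    have hvP : v ∉ P := fun hp => hLYP u hu v hp huv
    have := fRm v hvR
    rw [hta] at this; simp only [hvP, hvN, if_true, if_false] at this
    apply (Finset.mem_sdiff.1 this).2
    rw [hbad]
    refine Finset.mem_biUnion.2 ⟨u, mem_nb.2 ⟨hu, huv.symm⟩, mem_nb.2 ⟨fRI v hvR, ?_⟩⟩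
    rw [← fY u hu]; exact hG
  have fadj : ∀ u v, u ∉ D → v ∉ D → T.Adj u v → Gᶜ.Adj (f u) (f v) := by
    intro u v hu hv huv
    rw [SimpleGraph.compl_adj]
    refine ⟨fun he => huv.ne (finj (by simpa using hu) (by simpa using hv) he), ?_⟩
    rcases tri u hu with hu1 | hu1 | hu1
    · exact hnX u v hu1 hv huv
    · exact hnY u v hu1 hv huv
    rcases tri v hv with hv1 | hv1 | hv1
    · exact fun hG => hnX v u hv1 hu huv.symm hG.symm
    · exact fun hG => hnY v u hv1 hu huv.symm hG.symm
    · exact hI _ (fRI u hu1) _ (fRI v hv1)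
  have hcl : ∀ v ∈ Finset.univ \ D, v ≠ r → par v ∈ Finset.univ \ D := by
    intro v hv hvr
    simp only [Finset.mem_sdiff, Finset.mem_univ, true_and] at hv ⊢
    exact fun hp => hv (hDcl v hvr hp)
  obtain ⟨f', g1, g2, g3, g4⟩ := h.ext (H := Gᶜ) Finset.univ (fun _ _ _ => Finset.mem_univ _)
    D.card (Finset.univ \ D) U f (Finset.subset_univ _) (by simpa using hrD) hcl
    (by simp) finj
    (fun v hv hvr => fadj v (par v) (Finset.mem_sdiff.1 hv).2
      (Finset.mem_sdiff.1 (hcl v hv hvr)).2 (h.adj v hvr))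
    (by
      intro v hv hvU
      rcases tri v (Finset.mem_sdiff.1 hv).2 with hv1 | hv1 | hv1
      · exact ne_of dXU (fXm v hv1) hvU rfl
      · exact ne_of dYU (fYm v hv1) hvU rfl
      · exact ne_of dIU (fRI v hv1) hvU rfl)
    (by
      rintro v hv ⟨u, hu, rfl⟩
      have huD : u ∈ D := by simpa using hu
      have hvD := (Finset.mem_sdiff.1 hv).2
      have hvP : par u ∈ P := (hP u huD).resolve_left hvD
      apply hKU
      have hvR : par u ∉ D ∪ (LX ∪ LY) := by
        simp only [Finset.mem_union, not_or]
        exact ⟨hvD, Finset.disjoint_right.1 hXP hvP, Finset.disjoint_right.1 hYP hvP⟩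
      have := fRm _ hvR
      rw [hta] at this; simp only [hvP, if_true] at this
      exact (Finset.mem_sdiff.1 this).1)
    (fun _ _ _ w hw => (hUU w hw).trans (Nat.le_succ _))
  exact h.contains f' (fun a b hab => g2 (by simp) (by simp) hab)
    (fun v hv => g4 v (Finset.mem_univ _) hv)
end

section
open scoped Classical

/-- tree data without `LX` -/
structure TD0 {V : Type*} [Fintype V] (T : SimpleGraph V) (r : V) (par : V → V) (m k : ℕ)
    (D P LY : Finset V) : Prop where
  cD : D.card = k
  cP : P.card ≤ k
  hrD : r ∉ D
  hDcl : ∀ v, v ≠ r → par v ∈ D → v ∈ D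
  hP : ∀ v ∈ D, par v ∈ D ∨ par v ∈ P
  hYD : Disjoint LY D
  hYP : Disjoint LY P
  hind : ∀ u ∈ LY, ∀ v ∈ LY, ¬ T.Adj u v
  hLYP : ∀ u ∈ LY, ∀ p ∈ P, ¬ T.Adj u p
  hinj : ∀ u ∈ LY, ∀ v ∈ LY, par u = par v → u = v
  cLY : LY.card = m - 1 - k
  cNB : (NB T LY).card ≤ 2 * (m - 1) - k

section
set_option linter.unusedSectionVars false
variable {V : Type*} [Fintype V] {T : SimpleGraph V} {r : V} {par : V → V} {dep : V → ℕ}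

lemma RT.two_nb (h : RT T r par dep) (LY : Finset V)
    (hinj : ∀ u ∈ LY, ∀ v ∈ LY, par u = par v → u = v) (v : V) : (nb T v LY).card ≤ 2 := by
  have h1 : nb T v LY ⊆ insert (par v) (LY.filter (fun u => par u = v)) := by
    intro u hu
    obtain ⟨hu1, hu2⟩ := mem_nb.1 hu
    rcases h.edge v u hu2 with ⟨_, h2⟩ | ⟨_, h2⟩
    · simp [h2]
    · exact Finset.mem_insert_of_mem (Finset.mem_filter.2 ⟨hu1, h2⟩)
  have h2 : (LY.filter (fun u => par u = v)).card ≤ 1 := by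
    rw [Finset.card_le_one]
    intro a ha b hb
    rw [Finset.mem_filter] at ha hb
    exact hinj a ha.1 b hb.1 (ha.2.trans hb.2.symm)
  have := (Finset.card_le_card h1).trans (Finset.card_insert_le _ _)
  omega

lemma TD0.exists_LX (h : RT T r par dep) {m k : ℕ} {D P LY : Finset V}
    (t : TD0 T r par m k D P LY) (hm : 2 ≤ m) (hk : k ≤ m - 1)
    (hn : 9 * m ≤ Fintype.card V + 8) :
    ∃ LX : Finset V, LX.card = m - 1 ∧ Disjoint LX D ∧ Disjoint LX P ∧ Disjoint LX LY ∧
      (∀ u ∈ LX ∪ LY, ∀ v ∈ LX ∪ LY, ¬ T.Adj u v) ∧ (NB T LX).card ≤ 4 * (m - 1) := by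
  have hE : ((D ∪ P) ∪ (LY ∪ NB T LY)).card ≤ 3 * (m - 1) := by
    have h1 := Finset.card_union_le (D ∪ P) (LY ∪ NB T LY)
    have h2 := Finset.card_union_le D P
    have h3 := Finset.card_union_le LY (NB T LY)
    have := t.cD
    have := t.cP
    have := t.cLY
    have := t.cNB
    omega
  obtain ⟨LX, hd, hc, hind, hnb⟩ := h.exists_LX hm hn _ hE
  rw [Finset.disjoint_union_right, Finset.disjoint_union_right, Finset.disjoint_union_right] at hd
  obtain ⟨⟨d1, d2⟩, d3, d4⟩ := hd
  refine ⟨LX, hc, d1, d2, d3, ?_, hnb⟩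
  intro u hu v hv huv
  rcases Finset.mem_union.1 hu with hu | hu <;> rcases Finset.mem_union.1 hv with hv | hv
  · exact hind u hu v hv huv
  · exact Finset.disjoint_left.1 d4 hu (mem_NB.2 ⟨v, hv, huv.symm⟩)
  · exact Finset.disjoint_left.1 d4 hv (mem_NB.2 ⟨u, hu, huv⟩)
  · exact t.hind u hu v hv huv

/-- rooted leaves -/
noncomputable def Lf {V : Type*} [Fintype V] (r : V) (par : V → V) : Finset V :=
  Finset.univ.filter (fun v => ch r par v = ∅)

lemma mem_Lf {v : V} : v ∈ Lf r par ↔ ch r par v = ∅ := by simp [Lf]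

lemma notMem_Lf_par {u : V} (hu : u ≠ r) : par u ∉ Lf r par := by
  intro h
  rw [mem_Lf] at h
  have : u ∈ ch r par (par u) := mem_ch.2 ⟨hu, rfl⟩
  rw [h] at this; simp at this

lemma RT.root_notMem_Lf (h : RT T r par dep) (hV : 2 ≤ Fintype.card V) : r ∉ Lf r par := by
  obtain ⟨v, hv, hmin⟩ := Finset.exists_min_image (Finset.univ.erase r) dep
    (Finset.card_pos.1 (by rw [Finset.card_erase_of_mem (Finset.mem_univ _), Finset.card_univ]; omega))
  have hvr := Finset.ne_of_mem_erase hv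
  have : par v = r := by
    by_contra hp
    have := hmin (par v) (by simp [hp])
    have := h.dep v hvr
    omega
  have h9 := notMem_Lf_par (par := par) hvr
  rwa [this] at h9

lemma sum_ch_le (Q : Finset V) :
    ∑ v ∈ Q, (ch r par v).card + 1 ≤ Q.card + (Lf r par).card := by
  have h1 := sum_ch_univ (r := r) (par := par)
  rw [← Finset.sum_sdiff (Finset.subset_univ Q)] at h1
  have h2 : ((Finset.univ \ Q) \ Lf r par).card * 1 ≤ ∑ v ∈ Finset.univ \ Q, (ch r par v).card := by
    refine le_trans ?_ (Finset.sum_le_sum_of_subset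
      (Finset.sdiff_subset (s := Finset.univ \ Q) (t := Lf r par)))
    rw [← smul_eq_mul]
    apply Finset.card_nsmul_le_sum
    intro v hv
    have := (Finset.mem_sdiff.1 hv).2
    rw [mem_Lf] at this
    exact Finset.card_pos.2 (Finset.nonempty_iff_ne_empty.2 this)
  have h3 := Finset.le_card_sdiff (Lf r par) (Finset.univ \ Q)
  have h4 := Finset.card_sdiff_add_card_eq_card (Finset.subset_univ Q)
  rw [Finset.card_univ] at h4
  omega

lemma RT.NB_le (h : RT T r par dep) (Q : Finset V) :
    (NB T Q).card ≤ ∑ v ∈ Q, (ch r par v).card + Q.card := by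
  refine NB_card.trans ((Finset.sum_le_sum fun v _ => h.deg_le v).trans ?_)
  rw [Finset.sum_add_distrib]; simp

/-- descendant closed sets of every size -/
lemma RT.exists_closed (h : RT T r par dep) (k : ℕ) (hk : k + 1 ≤ Fintype.card V) :
    ∃ D : Finset V, D.card = k ∧ r ∉ D ∧ ∀ v, v ≠ r → par v ∈ D → v ∈ D := by
  induction k with
  | zero => exact ⟨∅, by simp⟩
  | succ k ih =>
    obtain ⟨D, h1, h2, h3⟩ := ih (by omega)
    have hne : ((Finset.univ \ D).erase r).Nonempty := by
      apply Finset.card_pos.1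
      rw [Finset.card_erase_of_mem (by simpa using h2)]
      have h4 := Finset.card_sdiff_add_card_eq_card (Finset.subset_univ D)
      rw [Finset.card_univ] at h4
      omega
    obtain ⟨v, hv, hmax⟩ := Finset.exists_max_image _ dep hne
    have hvr := Finset.ne_of_mem_erase hv
    have hvD : v ∉ D := (Finset.mem_sdiff.1 (Finset.mem_of_mem_erase hv)).2
    refine ⟨insert v D, by rw [Finset.card_insert_of_notMem hvD, h1], ?_, ?_⟩
    · simp only [Finset.mem_insert, not_or]; exact ⟨hvr.symm, h2⟩
    · intro u hu hp
      rcases Finset.mem_insert.1 hp with hp | hp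
      · by_contra hu'
        simp only [Finset.mem_insert, not_or] at hu'
        have := hmax u (by simp [hu, hu'.2])
        have := h.dep u hu
        rw [hp] at this
        omega
      · exact Finset.mem_insert_of_mem (h3 u hu hp)

/-- pick a large parity class -/
lemma exists_parity_class (dep : V → ℕ) (A : Finset V) (q : ℕ) (hq : 2 * q ≤ A.card + 1) :
    ∃ B ⊆ A, B.card = q ∧ ∀ u ∈ B, ∀ v ∈ B, dep u % 2 = dep v % 2 := by
  have hsp := Finset.card_filter_add_card_filter_not (s := A) (fun v => dep v % 2 = 0)
  by_cases h0 : q ≤ (A.filter (fun v => dep v % 2 = 0)).card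
  · obtain ⟨B, hB, hc⟩ := Finset.exists_subset_card_eq h0
    refine ⟨B, hB.trans (Finset.filter_subset _ _), hc, fun u hu v hv => ?_⟩
    have := (Finset.mem_filter.1 (hB hu)).2
    have := (Finset.mem_filter.1 (hB hv)).2
    omega
  · obtain ⟨B, hB, hc⟩ := Finset.exists_subset_card_eq (show q ≤
      (A.filter (fun v => ¬ dep v % 2 = 0)).card by omega)
    refine ⟨B, hB.trans (Finset.filter_subset _ _), hc, fun u hu v hv => ?_⟩
    have := (Finset.mem_filter.1 (hB hu)).2
    have := (Finset.mem_filter.1 (hB hv)).2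
    omega

/-- case of few leaves -/
lemma RT.td_few (h : RT T r par dep) {m k : ℕ} (hm : 2 ≤ m) (hk : k ≤ m - 1)
    (hn : 9 * m ≤ Fintype.card V + 8) (hl : (Lf r par).card < k) :
    ∃ D P LY, TD0 T r par m k D P LY := by
  obtain ⟨D, cD, hrD, hcl⟩ := h.exists_closed k (by omega)
  have hc : ∀ v, ∃ u, v ∉ Lf r par → u ∈ ch r par v := by
    intro v
    by_cases hv : v ∈ Lf r par
    · exact ⟨v, fun h => absurd hv h⟩
    · obtain ⟨u, hu⟩ := Finset.nonempty_iff_ne_empty.2 (fun hh => hv (mem_Lf.2 hh))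
      exact ⟨u, fun _ => hu⟩
  choose c hc using hc
  obtain ⟨P, hP⟩ : ∃ P, P = D.image par := ⟨_, rfl⟩
  have cP : P.card ≤ k := by rw [hP, ← cD]; exact Finset.card_image_le
  obtain ⟨B, hB⟩ : ∃ B, B = (Finset.univ \ Lf r par).image c := ⟨_, rfl⟩
  have hBpar : ∀ u ∈ B, u = c (par u) ∧ u ≠ r := by
    intro u hu
    rw [hB] at hu
    obtain ⟨v, hv, rfl⟩ := Finset.mem_image.1 hu
    have := mem_ch.1 (hc v (Finset.mem_sdiff.1 hv).2)
    rw [this.2]; exact ⟨rfl, this.1⟩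
  have cB : B.card + (Lf r par).card = Fintype.card V := by
    rw [hB, Finset.card_image_of_injOn, ← Finset.card_univ]
    · exact Finset.card_sdiff_add_card_eq_card (Finset.subset_univ _)
    · intro a ha b hb hab
      have h1 := mem_ch.1 (hc a (by simpa using ha))
      have h2 := mem_ch.1 (hc b (by simpa using hb))
      rw [← h1.2, ← h2.2, hab]
  have cE : (D ∪ (P ∪ NB T P)).card + 1 ≤ 4 * k + (Lf r par).card := by
    have h1 := Finset.card_union_le D (P ∪ NB T P)
    have h2 := Finset.card_union_le P (NB T P)
    have h3 := h.NB_le P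
    have h4 := sum_ch_le (r := r) (par := par) P
    omega
  have h5 := Finset.le_card_sdiff (D ∪ (P ∪ NB T P)) B
  obtain ⟨LY, hLY, cLY, hpar⟩ := exists_parity_class dep (B \ (D ∪ (P ∪ NB T P))) (m - 1 - k)
    (by omega)
  have hLYB : LY ⊆ B := hLY.trans Finset.sdiff_subset
  have hLYE : ∀ u ∈ LY, u ∉ D ∧ u ∉ P ∧ u ∉ NB T P := by
    intro u hu
    have := (Finset.mem_sdiff.1 (hLY hu)).2
    simpa only [Finset.mem_union, not_or] using this
  refine ⟨D, P, LY, cD, cP, hrD, hcl, ?_, ?_, ?_, ?_, ?_, ?_, cLY, ?_⟩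
  · intro v hv; right; rw [hP]; exact Finset.mem_image_of_mem _ hv
  · rw [Finset.disjoint_left]; exact fun u hu => (hLYE u hu).1
  · rw [Finset.disjoint_left]; exact fun u hu => (hLYE u hu).2.1
  · intro u hu v hv huv; exact h.parity huv (hpar u hu v hv)
  · intro u hu p hp hup
    exact (hLYE u hu).2.2 (mem_NB.2 ⟨p, hp, hup.symm⟩)
  · intro u hu v hv huv
    rw [(hBpar u (hLYB hu)).1, (hBpar v (hLYB hv)).1, huv]
  · have h3 := h.NB_le LY
    have h4 := sum_ch_le (r := r) (par := par) LY
    omega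

/-- common part of the leafy cases -/
lemma RT.td_leaf (h : RT T r par dep) {m k : ℕ} (hV : 2 ≤ Fintype.card V)
    (σ : V → V) (hσ : ∀ p ∈ (Lf r par).image par, σ p ∈ Lf r par ∧ par (σ p) = p)
    (D P Q C : Finset V) (cD : D.card = k) (cP : P.card ≤ k) (hDL : D ⊆ Lf r par)
    (hDP : ∀ v ∈ D, par v ∈ P) (hPL : P ⊆ (Lf r par).image par) (hQL : Q ⊆ (Lf r par).image par)
    (hPQ : Disjoint P Q) (hCpar : ∀ u ∈ C, ∀ v ∈ C, dep u % 2 = dep v % 2)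
    (hCinj : ∀ u ∈ C, ∀ v ∈ C, par u = par v → u = v)
    (hCL : ∀ u ∈ C, u ∉ Lf r par) (hCLP : ∀ u ∈ C, u ∉ (Lf r par).image par)
    (hCadj : ∀ u ∈ C, ∀ p ∈ (Lf r par).image par, ¬ T.Adj u p)
    (hCp : ∀ u ∈ C, par u ∉ (Lf r par).image par)
    (hc : Q.card + C.card = m - 1 - k) (hNB : Q.card + (NB T C).card ≤ 2 * (m - 1) - k) :
    ∃ D P LY, TD0 T r par m k D P LY := by
  have hrL := h.root_notMem_Lf hV
  have hLr : ∀ v ∈ Lf r par, v ≠ r := fun v hv hh => hrL (hh ▸ hv)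
  have hPnL : ∀ p ∈ (Lf r par).image par, p ∉ Lf r par := by
    intro p hp
    obtain ⟨v, hv, rfl⟩ := Finset.mem_image.1 hp
    exact notMem_Lf_par (hLr v hv)
  have hleaf : ∀ u ∈ Lf r par, ∀ v, T.Adj u v → par u = v := by
    intro u hu v huv
    rcases h.edge u v huv with h1 | h1
    · exact h1.2
    · exact absurd hu (h1.2 ▸ notMem_Lf_par h1.1)
  have hσQ : ∀ u ∈ Q.image σ, u ∈ Lf r par ∧ par u ∈ Q := by
    intro u hu
    obtain ⟨q, hq, rfl⟩ := Finset.mem_image.1 hu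
    have := hσ q (hQL hq)
    rw [this.2]; exact ⟨this.1, hq⟩
  have hσinj : Set.InjOn σ (Q : Set V) := by
    intro a ha b hb hab
    rw [← (hσ a (hQL ha)).2, ← (hσ b (hQL hb)).2, hab]
  have hσQ' : ∀ u ∈ Q.image σ, u = σ (par u) := by
    intro u hu
    obtain ⟨q, hq, rfl⟩ := Finset.mem_image.1 hu
    rw [(hσ q (hQL hq)).2]
  refine ⟨D, P, Q.image σ ∪ C, cD, cP, fun hr => hrL (hDL hr), ?_, fun v hv => Or.inr (hDP v hv),
    ?_, ?_, ?_, ?_, ?_, ?_, ?_⟩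
  · intro v hv hp
    exact absurd (hDL hp) (notMem_Lf_par hv)
  · rw [Finset.disjoint_left]
    intro u hu huD
    rcases Finset.mem_union.1 hu with hu | hu
    · exact Finset.disjoint_left.1 hPQ (hDP u huD) (hσQ u hu).2
    · exact hCL u hu (hDL huD)
  · rw [Finset.disjoint_left]
    intro u hu huP
    rcases Finset.mem_union.1 hu with hu | hu
    · exact hPnL u (hPL huP) (hσQ u hu).1
    · exact hCLP u hu (hPL huP)
  · intro u hu v hv huv
    rcases Finset.mem_union.1 hu with hu | hu <;> rcases Finset.mem_union.1 hv with hv | hv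
    · have := hleaf u (hσQ u hu).1 v huv
      exact hPnL v (this ▸ hQL (hσQ u hu).2) (hσQ v hv).1
    · have := hleaf u (hσQ u hu).1 v huv
      exact hCLP v hv (this ▸ hQL (hσQ u hu).2)
    · have := hleaf v (hσQ v hv).1 u huv.symm
      exact hCLP u hu (this ▸ hQL (hσQ v hv).2)
    · exact h.parity huv (hCpar u hu v hv)
  · intro u hu p hp hup
    rcases Finset.mem_union.1 hu with hu | hu
    · have := hleaf u (hσQ u hu).1 p hup
      exact Finset.disjoint_left.1 hPQ hp (this ▸ (hσQ u hu).2)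
    · exact hCadj u hu p (hPL hp) hup
  · intro u hu v hv huv
    rcases Finset.mem_union.1 hu with hu | hu <;> rcases Finset.mem_union.1 hv with hv | hv
    · rw [hσQ' u hu, hσQ' v hv, huv]
    · exact absurd (huv ▸ hQL (hσQ u hu).2) (hCp v hv)
    · exact absurd (huv ▸ hQL (hσQ v hv).2) (hCp u hu)
    · exact hCinj u hu v hv huv
  · rw [Finset.card_union_of_disjoint, Finset.card_image_of_injOn hσinj, hc]
    rw [Finset.disjoint_left]
    intro u hu hu'
    exact hCL u hu' (hσQ u hu).1
  · have h1 : NB T (Q.image σ ∪ C) ⊆ Q ∪ NB T C := by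
      intro v hv
      obtain ⟨u, hu, huv⟩ := mem_NB.1 hv
      rcases Finset.mem_union.1 hu with hu | hu
      · have := hleaf u (hσQ u hu).1 v huv
        exact Finset.mem_union_left _ (this ▸ (hσQ u hu).2)
      · exact Finset.mem_union_right _ (mem_NB.2 ⟨u, hu, huv⟩)
    exact ((Finset.card_le_card h1).trans (Finset.card_union_le _ _)).trans hNB

lemma RT.exists_TD (h : RT T r par dep) {m k : ℕ} (hm : 9 ≤ m) (hk : k ≤ m - 1)
    (hn : m * m + 1 ≤ Fintype.card V + m)
    (hleaf : ∀ c, ((Lf r par).filter (fun u => par u = c)).card ≤ m - 2) :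
    ∃ D P LY, TD0 T r par m k D P LY := by
  have hn9 : 9 * m ≤ Fintype.card V + 8 := by nlinarith
  have hV : 2 ≤ Fintype.card V := by omega
  by_cases hlk : (Lf r par).card < k
  · exact h.td_few (by omega) hk hn9 hlk
  push Not at hlk
  have hrL := h.root_notMem_Lf hV
  have hLr : ∀ v ∈ Lf r par, v ≠ r := fun v hv hh => hrL (hh ▸ hv)
  obtain ⟨LP, hLP⟩ : ∃ LP, LP = (Lf r par).image par := ⟨_, rfl⟩
  have hσ : ∀ p, ∃ u, p ∈ LP → u ∈ Lf r par ∧ par u = p := by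
    intro p
    by_cases hp : p ∈ LP
    · rw [hLP] at hp
      obtain ⟨u, hu, hup⟩ := Finset.mem_image.1 hp
      exact ⟨u, fun _ => ⟨hu, hup⟩⟩
    · exact ⟨p, fun h => absurd h hp⟩
  choose σ hσ using hσ
  have hσ' : ∀ p ∈ (Lf r par).image par, σ p ∈ Lf r par ∧ par (σ p) = p := by
    rw [← hLP]; exact hσ
  have hσinj : Set.InjOn σ (LP : Set V) := by
    intro a ha b hb hab
    rw [← (hσ a ha).2, ← (hσ b hb).2, hab]
  -- data from a subset of `LP`
  have fromQ : ∀ Q1 ⊆ LP, (Q1.image σ).card = Q1.card ∧ Q1.image σ ⊆ Lf r par ∧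
      ∀ v ∈ Q1.image σ, par v ∈ Q1 := by
    intro Q1 hQ1
    refine ⟨Finset.card_image_of_injOn (hσinj.mono (by exact_mod_cast hQ1)), ?_, ?_⟩
    · intro v hv
      obtain ⟨q, hq, rfl⟩ := Finset.mem_image.1 hv
      exact (hσ q (hQ1 hq)).1
    · intro v hv
      obtain ⟨q, hq, rfl⟩ := Finset.mem_image.1 hv
      rw [(hσ q (hQ1 hq)).2]; exact hq
  by_cases hg : m - 1 ≤ LP.card
  · obtain ⟨Q, hQ, cQ⟩ := Finset.exists_subset_card_eq hg
    obtain ⟨Q1, hQ1, cQ1⟩ := Finset.exists_subset_card_eq (show k ≤ Q.card by omega)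
    obtain ⟨f1, f2, f3⟩ := fromQ Q1 (hQ1.trans hQ)
    have hcs := Finset.card_sdiff_add_card_eq_card hQ1
    refine h.td_leaf hV σ hσ' (Q1.image σ) Q1 (Q \ Q1) ∅ (f1.trans cQ1) cQ1.le f2 f3
      (hLP ▸ hQ1.trans hQ) (hLP ▸ Finset.sdiff_subset.trans hQ) Finset.disjoint_sdiff
      ?_ ?_ ?_ ?_ ?_ ?_ ?_ ?_
    any_goals simp
    · omega
    · simp [NB]; omega
  · push Not at hg
    have hc : ∀ v, ∃ u, v ∉ Lf r par → u ∈ ch r par v := by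
      intro v
      by_cases hv : v ∈ Lf r par
      · exact ⟨v, fun h => absurd hv h⟩
      · obtain ⟨u, hu⟩ := Finset.nonempty_iff_ne_empty.2 (fun hh => hv (mem_Lf.2 hh))
        exact ⟨u, fun _ => hu⟩
    choose c hc using hc
    have hLPnL : ∀ p ∈ LP, p ∉ Lf r par := by
      intro p hp
      rw [hLP] at hp
      obtain ⟨v, hv, rfl⟩ := Finset.mem_image.1 hp
      exact notMem_Lf_par (hLr v hv)
    obtain ⟨B, hB⟩ : ∃ B, B = (Finset.univ \ (Lf r par ∪ LP)).image c := ⟨_, rfl⟩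
    have hBpar : ∀ u ∈ B, u = c (par u) ∧ u ≠ r ∧ par u ∉ LP ∧ u ∉ Lf r par := by
      intro u hu
      rw [hB] at hu
      obtain ⟨v, hv, rfl⟩ := Finset.mem_image.1 hu
      simp only [Finset.mem_sdiff, Finset.mem_univ, true_and, Finset.mem_union, not_or] at hv
      have := mem_ch.1 (hc v hv.1)
      rw [this.2]
      refine ⟨rfl, this.1, hv.2, fun hh => hv.2 ?_⟩
      rw [hLP]
      exact Finset.mem_image.2 ⟨_, hh, this.2⟩
    have cB : B.card + ((Lf r par).card + LP.card) = Fintype.card V := by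
      rw [hB, Finset.card_image_of_injOn, ← Finset.card_univ, ← Finset.card_union_of_disjoint]
      · exact Finset.card_sdiff_add_card_eq_card (Finset.subset_univ _)
      · rw [Finset.disjoint_right]; exact hLPnL
      · intro a ha b hb hab
        simp only [Finset.coe_sdiff, Finset.coe_union, Set.mem_sdiff, Finset.mem_coe, Set.mem_union,
          not_or] at ha hb
        have h1 := mem_ch.1 (hc a ha.2.1)
        have h2 := mem_ch.1 (hc b hb.2.1)
        rw [← h1.2, ← h2.2, hab]
    have hlam : (Lf r par).card ≤ (m - 2) * LP.card := by
      rw [hLP]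
      exact Finset.card_le_mul_card_image _ _ (fun c _ => hleaf c)
    have cA := Finset.le_card_sdiff (LP ∪ LP.image par) B
    have cA2 := Finset.card_union_le LP (LP.image par)
    have cA3 : (LP.image par).card ≤ LP.card := Finset.card_image_le
    have hbig : 2 * m ≤ B.card + 1 := by
      obtain ⟨q, rfl⟩ : ∃ q, m = q + 2 := ⟨m - 2, by omega⟩
      have e1 : q + 2 - 2 = q := by omega
      rw [e1] at hlam
      have e2 : LP.card ≤ q := by omega
      have e3 : (q + 1) * LP.card ≤ (q + 1) * q := Nat.mul_le_mul_left _ e2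
      nlinarith
    have mkC : ∀ q, 2 * q + 2 * LP.card ≤ B.card + 1 → ∃ C : Finset V, C.card = q ∧
        (∀ u ∈ C, ∀ v ∈ C, dep u % 2 = dep v % 2) ∧
        (∀ u ∈ C, ∀ v ∈ C, par u = par v → u = v) ∧
        (∀ u ∈ C, u ∉ Lf r par) ∧ (∀ u ∈ C, u ∉ LP) ∧
        (∀ u ∈ C, ∀ p ∈ LP, ¬ T.Adj u p) ∧ (∀ u ∈ C, par u ∉ LP) ∧
        (NB T C).card + 1 ≤ 2 * q + LP.card := by
      intro q hq
      obtain ⟨C, hCs, cC, hCp⟩ := exists_parity_class dep (B \ (LP ∪ LP.image par)) q (by omega)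
      have hCB : C ⊆ B := hCs.trans Finset.sdiff_subset
      have hCE : ∀ u ∈ C, u ∉ LP ∧ u ∉ LP.image par := by
        intro u hu
        have := (Finset.mem_sdiff.1 (hCs hu)).2
        simpa only [Finset.mem_union, not_or] using this
      refine ⟨C, cC, hCp, ?_, fun u hu => (hBpar u (hCB hu)).2.2.2, fun u hu => (hCE u hu).1, ?_,
        fun u hu => (hBpar u (hCB hu)).2.2.1, ?_⟩
      · intro u hu v hv huv
        rw [(hBpar u (hCB hu)).1, (hBpar v (hCB hv)).1, huv]
      · intro u hu p hp hup
        rcases h.edge u p hup with ⟨_, h1⟩ | ⟨_, h1⟩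
        · exact (hBpar u (hCB hu)).2.2.1 (h1 ▸ hp)
        · exact (hCE u hu).2 (h1 ▸ Finset.mem_image_of_mem _ hp)
      · have h1 := h.NB_le C
        have hd : Disjoint C LP := by
          rw [Finset.disjoint_left]; exact fun u hu => (hCE u hu).1
        have h2 := sum_ch_le (r := r) (par := par) (C ∪ LP)
        rw [Finset.sum_union hd, Finset.card_union_of_disjoint hd] at h2
        have h3 : (Lf r par).card ≤ ∑ v ∈ LP, (ch r par v).card := by
          rw [sum_ch]
          apply Finset.card_le_card
          intro u hu
          simp only [Finset.mem_filter, Finset.mem_univ, true_and]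
          exact ⟨hLr u hu, hLP ▸ Finset.mem_image_of_mem _ hu⟩
        omega
    by_cases hkg : k ≤ LP.card
    · obtain ⟨Q1, hQ1, cQ1⟩ := Finset.exists_subset_card_eq hkg
      obtain ⟨f1, f2, f3⟩ := fromQ Q1 hQ1
      have hcs := Finset.card_sdiff_add_card_eq_card hQ1
      obtain ⟨C, cC, p1, p2, p3, p4, p5, p6, p7⟩ := mkC (m - 1 - LP.card) (by omega)
      refine h.td_leaf hV σ hσ' (Q1.image σ) Q1 (LP \ Q1) C (f1.trans cQ1) cQ1.le f2 f3
        (hLP ▸ hQ1) (hLP ▸ Finset.sdiff_subset) Finset.disjoint_sdiff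
        p1 p2 p3 (hLP ▸ p4) (hLP ▸ p5) (hLP ▸ p6) (by omega) (by omega)
    · obtain ⟨D, hD, cD⟩ := Finset.exists_subset_card_eq hlk
      obtain ⟨C, cC, p1, p2, p3, p4, p5, p6, p7⟩ := mkC (m - 1 - k) (by omega)
      refine h.td_leaf hV σ hσ' D LP ∅ C cD (by omega) hD
        (fun v hv => hLP ▸ Finset.mem_image_of_mem _ (hD hv))
        (hLP ▸ Finset.Subset.refl _) (by simp) (by simp)
        p1 p2 p3 (hLP ▸ p4) (hLP ▸ p5) (hLP ▸ p6) (by simp; omega) (by simp; omega)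
end
end

section
open scoped Classical
variable {V W : Type*} [Fintype V] [Fintype W] {T : SimpleGraph V} {r : V} {par : V → V}
  {dep : V → ℕ} {G : SimpleGraph W}

/-- greedy embedding when the complement has large minimum degree -/
lemma RT.greedy (h : RT T r par dep) (C1 : Finset V) (hr : r ∈ C1)
    (hcl : ∀ v ∈ C1, v ≠ r → par v ∈ C1) (z : W) {H : SimpleGraph W}
    (hz : C1.card ≤ (nb H z Finset.univ).card + 1)
    (hH : ∀ w, C1.card ≤ (nb H w Finset.univ).card + 1) :
    ∃ f : V → W, f r = z ∧ Set.InjOn f C1 ∧ ∀ v ∈ C1, v ≠ r → H.Adj (f v) (f (par v)) := by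
  have hc : (C1 \ {r}).card + 1 = C1.card := by
    rw [Finset.sdiff_singleton_eq_erase]; exact Finset.card_erase_add_one hr
  obtain ⟨f, f1, f2, f3, f4⟩ := h.ext (H := H) C1 hcl (C1 \ {r}).card {r} (Finset.univ.erase z)
    (fun _ => z) (by simpa using hr) (by simp) (by simp) rfl (by simp) (by simp) (by simp)
    (by intro v _ _; rw [nb_erase]; omega)
    (by
      intro v _ _ w _
      have h1 := hH w
      have h2 := nb_sdiff_card (G := H) (v := w) (Z := Finset.univ) (Z' := {z})
      rw [Finset.sdiff_singleton_eq_erase, Finset.card_singleton] at h2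
      omega)
  exact ⟨f, f1 r (by simp), f2, f4⟩

lemma deg_compl (v : W) : (nb G v Finset.univ).card + (nb Gᶜ v Finset.univ).card + 1 =
    Fintype.card W := by
  rw [← Finset.card_univ]; exact nb_compl_mem (Finset.mem_univ v)

/-- many leaves at one vertex -/
lemma many_leaves (hT : T.IsTree) {m n : ℕ} (hm : 2 ≤ m) (hV : Fintype.card V = n)
    (hW : Fintype.card W = 2 * n - 1) (c : V) (L : Finset V) (hL : m - 1 ≤ L.card)
    (hLc : ∀ u ∈ L, T.Adj u c ∧ ∀ v, T.Adj u v → v = c)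
    (hdeg : ∀ v, (nb G v Finset.univ).card ≤ n + m - 2)
    (z : W) (hz : (nb G z Finset.univ).card < n) : Contains Gᶜ T := by
  obtain ⟨par, dep, h⟩ := exists_RT hT c
  have hcL : c ∉ L := fun hc => (hLc c hc).1.ne rfl
  have hLne : ∀ u ∈ L, u ≠ c := fun u hu huc => hcL (huc ▸ hu)
  have hparL : ∀ u ∈ L, par u = c := fun u hu => (hLc u hu).2 _ (h.adj u (hLne u hu))
  have hnoch : ∀ v, v ≠ c → par v ∉ L := by
    intro v hv hp
    exact hv ((hLc _ hp).2 v (h.adj v hv).symm)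
  have cC := Finset.card_sdiff_add_card_eq_card (Finset.subset_univ L)
  rw [Finset.card_univ, hV] at cC
  have hcl : ∀ v ∈ Finset.univ \ L, v ≠ c → par v ∈ Finset.univ \ L := by
    intro v _ hv; simpa using hnoch v hv
  obtain ⟨f, f1, f2, f3⟩ := h.greedy (H := Gᶜ) (Finset.univ \ L) (by simpa using hcL) hcl z
    (by have := deg_compl (G := G) z; omega)
    (by intro w; have := deg_compl (G := G) w; have := hdeg w; omega)
  have hzim : z ∈ (Finset.univ \ L).image f := Finset.mem_image.2 ⟨c, by simpa using hcL, f1⟩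
  obtain ⟨f', g1, g2, g3, g4⟩ := h.ext (H := Gᶜ) Finset.univ (fun _ _ _ => Finset.mem_univ _)
    L.card (Finset.univ \ L) (Finset.univ \ (Finset.univ \ L).image f) f (Finset.subset_univ _)
    (by simpa using hcL) hcl (by simp) f2 f3
    (by
      intro v hv hh
      exact (Finset.mem_sdiff.1 hh).2 (Finset.mem_image_of_mem _ hv))
    (by
      rintro v hv ⟨u, hu, rfl⟩
      have huL : u ∈ L := by simpa using hu
      rw [hparL u huL, f1]
      have h1 := deg_compl (G := G) z
      have h2 := nb_split (G := Gᶜ) (u := z) ((Finset.univ \ L).image f)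
      have h3 : (nb Gᶜ z ((Finset.univ \ L).image f)).card ≤
          (((Finset.univ \ L).image f).erase z).card := by
        rw [← nb_erase]; exact nb_card_le
      rw [Finset.card_erase_of_mem hzim, Finset.card_image_of_injOn f2] at h3
      have h4 : 0 < (Finset.univ \ L).card := Finset.card_pos.2 ⟨c, by simpa using hcL⟩
      omega)
    (by
      rintro v hv ⟨u, hu, rfl⟩
      have hvL : par u ∈ L := by simpa using hv
      have huL : u ∈ L := by simpa using hu
      exact absurd hvL (hnoch u (hLne u huL)))
  exact h.contains f' (fun a b hab => g2 (by simp) (by simp) hab)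
    (fun v hv => g4 v (Finset.mem_univ _) hv)

/-- maximum degree bound -/
lemma step_one (h : RT T r par dep) {m n : ℕ} (hm : 2 ≤ m) (hV : Fintype.card V = n)
    (hn : 9 * m ≤ n + 8) (hno : ¬ Contains G (fan m)) (hnoT : ¬ Contains Gᶜ T) (v : W) :
    (nb G v Finset.univ).card ≤ n + m - 2 := by
  by_contra hlt
  obtain ⟨S, hS, cS⟩ := Finset.exists_subset_card_eq (show n + m - 1 ≤
    (nb G v Finset.univ).card by omega)
  have hSm : ¬ HasM G S m := fun hh => hno (fan_of_hasM (v := v)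
    (fun z hz => (mem_nb.1 (hS hz)).2) hh)
  obtain ⟨s, hs, X, Y, I, F, Yl, cX, cY, cI, hXS, hYS, hIS, dXY, dXI, dYI, hI, hFI, hXF, hYl, cF,
    hYl1⟩ := match_lemma' hSm
  have cYl := Finset.card_le_card hYl
  obtain ⟨LX0, -, cL0, hind, hnb⟩ := h.exists_LX hm (by omega) ∅ (by simp)
  obtain ⟨LX, hLX, cLX⟩ := Finset.exists_subset_card_eq (show s ≤ LX0.card by omega)
  have hnb' := (Finset.card_le_card (NB_mono (T := T) hLX)).trans hnb
  apply hnoT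
  have : Nonempty W := ⟨v⟩
  refine core h ∅ ∅ LX ∅ (by simp) (by simp) (by simp) (by simp) (by simp) (by simp) (by simp)
    ?_ (by simp) (by simp [nb]) I X ∅ ∅ F ∅ 0 dXI.symm (by simp) (by simp) (by simp) (by simp)
    (by simp) (by simp) hI hXF (by simp) (by simp) (by simp) (by simp) (by simp) (by omega)
    (by simp) ?_ ?_ ?_
  · intro u hu w hw
    simp only [Finset.union_empty] at hu hw
    exact hind u (hLX hu) w (hLX hw)
  · simp; omega
  · simp [NB]; omega
  · simp only [NB, Finset.biUnion_empty, Finset.card_empty] at hnb' ⊢; omega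

/-- core lemma packaged with tree data -/
lemma core_td (h : RT T r par dep) {m n k : ℕ} (hm : 2 ≤ m) (hk : k ≤ m - 1)
    (hV : Fintype.card V = n) (hn : 9 * m ≤ n + 8) [Nonempty W]
    (hTD : ∃ D P LY, TD0 T r par m k D P LY)
    (I X Y U F K : Finset W)
    (dIX : Disjoint I X) (dIY : Disjoint I Y) (dIU : Disjoint I U) (dXY : Disjoint X Y)
    (dXU : Disjoint X U) (dYU : Disjoint Y U)
    (hI : ∀ a ∈ I, ∀ b ∈ I, ¬ G.Adj a b) (hX : ∀ x ∈ X, ∀ a ∈ I \ F, ¬ G.Adj x a)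
    (hY : ∀ y ∈ Y, (nb G y I).card ≤ 2 * m - 3) (hKI : K ⊆ I) (hPK : k ≤ (K \ F).card)
    (hKU : ∀ a ∈ K, k ≤ (nb Gᶜ a U).card) (hUU : ∀ u ∈ U, k ≤ (nb Gᶜ u U).card)
    (cX : X.card ≤ m - 1) (cY : Y.card ≤ m - 1 - k)
    (hsum : n ≤ I.card + X.card + Y.card + k)
    (hF : 6 * m - 6 + F.card ≤ I.card) : Contains Gᶜ T := by
  obtain ⟨D, P, LY0, t⟩ := hTD
  obtain ⟨LX0, cLX0, d1, d2, d3, hind, hnb⟩ := t.exists_LX h hm hk (by omega)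
  obtain ⟨LX, hLX, cLX⟩ := Finset.exists_subset_card_eq (show X.card ≤ LX0.card by omega)
  obtain ⟨LY, hLY, cLY⟩ := Finset.exists_subset_card_eq (show Y.card ≤ LY0.card by
    have := t.cLY; omega)
  have hnX := (Finset.card_le_card (NB_mono (T := T) hLX)).trans hnb
  have hnY := (Finset.card_le_card (NB_mono (T := T) hLY)).trans t.cNB
  have hcP := t.cP
  have hcD := t.cD
  refine core h D P LX LY t.hrD t.hDcl t.hP (Finset.disjoint_of_subset_left hLX d1)
    (Finset.disjoint_of_subset_left hLY t.hYD) (Finset.disjoint_of_subset_left hLX d2)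
    (Finset.disjoint_of_subset_left hLY t.hYP) ?_
    (fun u hu p hp => t.hLYP u (hLY hu) p hp)
    (fun v => (nb_card_mono hLY).trans (h.two_nb LY0 t.hinj v))
    I X Y U F K (2 * m - 3) dIX dIY dIU dXY dXU dYU
    (Finset.disjoint_of_subset_left hLX (Finset.disjoint_of_subset_right hLY d3))
    hI hX hY hKI (hcP.trans hPK) (fun a ha => hcD ▸ hKU a ha) (fun u hu => hcD ▸ hUU u hu)
    cLX.le cLY.le (by omega) (by omega) (by omega)
  intro u hu w hw
  exact hind u (Finset.union_subset_union hLX hLY hu) w (Finset.union_subset_union hLX hLY hw)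

lemma final_step (h : RT T r par dep) {m n : ℕ} (hm : 9 ≤ m)
    (hV : Fintype.card V = n) (hW : Fintype.card W = 2 * n - 1) (hn : 9 * m ≤ n + 8)
    (hTD : ∀ k, k ≤ m - 1 → ∃ D P LY, TD0 T r par m k D P LY)
    (hno : ¬ Contains G (fan m)) (hdeg : ∀ v, (nb G v Finset.univ).card ≤ n + m - 2)
    (v : W) (hv : n ≤ (nb G v Finset.univ).card) : Contains Gᶜ T := by
  have : Nonempty W := ⟨v⟩
  obtain ⟨S, hS, cS⟩ := Finset.exists_subset_card_eq hv
  have hSm : ¬ HasM G S m := fun hh => hno (fan_of_hasM (v := v)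
    (fun z hz => (mem_nb.1 (hS hz)).2) hh)
  obtain ⟨s, hs, X, Y, I, F, Yl, cX, cY, cI, hXS, hYS, hIS, dXY, dXI, dYI, hI, hFI, hXF, hYl, cF,
    hYl1⟩ := match_lemma' hSm
  have cYl := Finset.card_le_card hYl
  obtain ⟨Y', hY'⟩ : ∃ Y', Y' = Finset.univ.filter (fun w => w ∉ I ∧ w ∉ X ∧
    (nb G w I).card ≤ 2 * m - 3) := ⟨_, rfl⟩
  have mY' : ∀ w, w ∈ Y' ↔ w ∉ I ∧ w ∉ X ∧ (nb G w I).card ≤ 2 * m - 3 := by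
    intro w; rw [hY']; simp
  have hYlY' : Yl ⊆ Y' := by
    intro y hy
    rw [mY']
    refine ⟨Finset.disjoint_left.1 dYI (hYl hy), Finset.disjoint_right.1 dXY (hYl hy), ?_⟩
    have := hYl1 y hy
    omega
  have cYl' := Finset.card_le_card hYlY'
  have dIY' : Disjoint I Y' := by
    rw [Finset.disjoint_right]; exact fun w hw => ((mY' w).1 hw).1
  have dXY' : Disjoint X Y' := by
    rw [Finset.disjoint_right]; exact fun w hw => ((mY' w).1 hw).2.1
  by_cases hsY : s ≤ Y'.card
  · obtain ⟨Y0, hY0, cY0⟩ := Finset.exists_subset_card_eq hsY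
    exact core_td h (by omega) (Nat.zero_le _) hV hn (hTD 0 (Nat.zero_le _)) I X Y0 ∅ F ∅
      dXI.symm (Finset.disjoint_of_subset_right hY0 dIY') (by simp)
      (Finset.disjoint_of_subset_right hY0 dXY') (by simp) (by simp) hI hXF
      (fun y hy => ((mY' y).1 (hY0 hy)).2.2) (by simp) (by simp) (by simp) (by simp)
      (by omega) (by omega) (by omega) (by omega)
  push Not at hsY
  obtain ⟨k, hk⟩ : ∃ k, s = Y'.card + k := ⟨s - Y'.card, by omega⟩
  obtain ⟨U, hU⟩ : ∃ U, U = Finset.univ \ (I ∪ (X ∪ Y')) := ⟨_, rfl⟩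
  have mU : ∀ w, w ∈ U ↔ w ∉ I ∧ w ∉ X ∧ w ∉ Y' := by
    intro w; rw [hU]; simp [not_or]
  have cU : U.card = n - 1 + k := by
    have h1 := Finset.card_sdiff_add_card_eq_card (Finset.subset_univ (I ∪ (X ∪ Y')))
    rw [← hU, Finset.card_univ, Finset.card_union_of_disjoint
      (Finset.disjoint_union_right.2 ⟨dXI.symm, dIY'⟩), Finset.card_union_of_disjoint dXY'] at h1
    omega
  have hUI : ∀ u ∈ U, 2 * m - 2 ≤ (nb G u I).card := by
    intro u hu
    have h1 := (mU u).1 hu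
    by_contra hlt
    exact h1.2.2 ((mY' u).2 ⟨h1.1, h1.2.1, by omega⟩)
  have hUU : ∀ u ∈ U, k ≤ (nb Gᶜ u U).card := by
    intro u hu
    have h1 := hdeg u
    have h2 := deg_compl (G := G) u
    have h3 := nb_split (G := Gᶜ) (u := u) (I ∪ (X ∪ Y'))
    rw [← hU] at h3
    have h4 := nb_union_card_le (G := Gᶜ) (v := u) (Z := I) (Z' := X ∪ Y')
    have h5 := nb_union_card_le (G := Gᶜ) (v := u) (Z := X) (Z' := Y')
    have h6 := nb_compl (G := G) ((mU u).1 hu).1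
    have h7 := nb_card_le (G := Gᶜ) (v := u) (Z := X)
    have h8 := nb_card_le (G := Gᶜ) (v := u) (Z := Y')
    have h9 := hUI u hu
    omega
  obtain ⟨K, hK⟩ : ∃ K, K = I.filter (fun a => k ≤ (nb Gᶜ a U).card) := ⟨_, rfl⟩
  have hKI : K ⊆ I := by rw [hK]; exact Finset.filter_subset _ _
  have dIU : Disjoint I U := by
    rw [Finset.disjoint_right]; exact fun w hw => ((mU w).1 hw).1
  by_cases hsK : s ≤ K.card
  · have hKF := Finset.le_card_sdiff F K
    exact core_td h (by omega) (by omega) hV hn (hTD k (by omega)) I X Y' U F K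
      dXI.symm dIY' dIU dXY'
      (by rw [Finset.disjoint_right]; exact fun w hw => ((mU w).1 hw).2.1)
      (by rw [Finset.disjoint_right]; exact fun w hw => ((mU w).1 hw).2.2) hI hXF
      (fun y hy => ((mY' y).1 hy).2.2) hKI (by omega)
      (fun a ha => by rw [hK] at ha; exact (Finset.mem_filter.1 ha).2) hUU
      (by omega) (by omega) (by omega) (by omega)
  push Not at hsK
  have hIK : ∀ a ∈ I \ K, (nb Gᶜ a U).card + 1 ≤ k := by
    intro a ha
    obtain ⟨h1, h2⟩ := Finset.mem_sdiff.1 ha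
    by_contra hlt
    apply h2
    rw [hK]; exact Finset.mem_filter.2 ⟨h1, by omega⟩
  have hUdeg : ∀ u ∈ U, (nb G u U).card ≤ m + k - 2 := by
    intro u hu
    by_contra hlt
    apply hno
    refine fan_of_cross (u := u) (A := nb G u (I \ K)) (Z := U) (fun a ha => (mem_nb.1 ha).2)
      ?_ ?_ ?_
    · have h1 := nb_sdiff_card (G := G) (v := u) (Z := I) (Z' := K)
      have h2 := hUI u hu
      omega
    · exact Finset.disjoint_of_subset_left (nb_subset.trans Finset.sdiff_subset) dIU
    · intro a ha
      have haI := (mem_nb.1 ha).1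
      have h1 := hIK a haI
      have h2 := nb_inter_card (G := G) (u := a) (v := u) (Z := U)
      have h3 := nb_compl (G := G) (Finset.disjoint_left.1 dIU (Finset.mem_sdiff.1 haI).1)
      omega
  obtain ⟨a, ha⟩ : (I \ K).Nonempty := by
    apply Finset.card_pos.1
    have := Finset.le_card_sdiff K I
    omega
  have ha' := Finset.disjoint_left.1 dIU (Finset.mem_sdiff.1 ha).1
  obtain ⟨S2, hS2, cS2⟩ := Finset.exists_subset_card_eq (show n ≤ (nb G a U).card by
    have h1 := hIK a ha
    have h3 := nb_compl (G := G) ha'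
    omega)
  have hSm2 : ¬ HasM G S2 m := fun hh => hno (fan_of_hasM (v := a)
    (fun z hz => (mem_nb.1 (hS2 hz)).2) hh)
  have hS2U : S2 ⊆ U := hS2.trans nb_subset
  obtain ⟨s2, hs2, X2, Y2, I2, F2, Yl2, cX2, cY2, cI2, hXS2, hYS2, hIS2, dXY2, dXI2, dYI2, hI2,
    hFI2, hXF2, hYl2, cF2, -⟩ := match_lemma' hSm2
  have cYl2 := Finset.card_le_card hYl2
  exact core_td h (by omega) (Nat.zero_le _) hV hn (hTD 0 (Nat.zero_le _)) I2 X2 Y2 ∅ F2 ∅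
      dXI2.symm dYI2.symm (by simp) dXY2 (by simp) (by simp) hI2 hXF2
      (fun y hy => by
        have h1 := hUdeg y (hS2U (hYS2 hy))
        have h2 := nb_card_mono (G := G) (v := y) (hIS2.trans hS2U)
        omega) (by simp) (by simp) (by simp) (by simp)
      (by omega) (by omega) (by omega) (by omega)

lemma main_thm (hT : T.IsTree) {m n : ℕ} (hm : 9 ≤ m) (hn : m * m + 1 ≤ n + m)
    (hV : Fintype.card V = n) (hW : Fintype.card W = 2 * n - 1) :
    Contains G (fan m) ∨ Contains Gᶜ T := by
  by_contra hcon
  obtain ⟨hno, hnoT⟩ := not_or.1 hcon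
  have hn9 : 9 * m ≤ n + 8 := by nlinarith
  obtain ⟨r⟩ : Nonempty V := Fintype.card_pos_iff.1 (by omega)
  obtain ⟨z0⟩ : Nonempty W := Fintype.card_pos_iff.1 (by omega)
  obtain ⟨par, dep, h⟩ := exists_RT hT r
  -- some vertex has large degree
  have hB : ∃ v, n ≤ (nb G v Finset.univ).card := by
    by_contra hlt
    push Not at hlt
    have hd : ∀ w, (Finset.univ : Finset V).card ≤ (nb Gᶜ w Finset.univ).card + 1 := by
      intro w
      have := deg_compl (G := G) w
      have := hlt w
      rw [Finset.card_univ]; omega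
    obtain ⟨f, f1, f2, f3⟩ := h.greedy (H := Gᶜ) Finset.univ (Finset.mem_univ _)
      (fun _ _ _ => Finset.mem_univ _) z0 (hd z0) hd
    exact hnoT (h.contains f (fun a b hab => f2 (by simp) (by simp) hab)
      (fun v hv => f3 v (Finset.mem_univ _) hv))
  obtain ⟨v, hv⟩ := hB
  have hdeg := fun v => step_one h (by omega) hV hn9 hno hnoT v
  obtain ⟨z, hz⟩ := star_theorem hm hn hW hno
  have hleaf : ∀ c, ((Lf r par).filter (fun u => par u = c)).card ≤ m - 2 := by
    intro c
    by_contra hlt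
    refine hnoT (many_leaves hT (by omega) hV hW c ((Lf r par).filter (fun u => par u = c)) (by omega) ?_ hdeg z hz)
    intro u hu
    obtain ⟨hu1, hu2⟩ := Finset.mem_filter.1 hu
    have hur : u ≠ r := fun hh => h.root_notMem_Lf (by omega) (hh ▸ hu1)
    refine ⟨hu2 ▸ h.adj u hur, fun w hw => ?_⟩
    rcases h.edge u w hw with h1 | h1
    · rw [← h1.2, hu2]
    · exact absurd hu1 (h1.2 ▸ notMem_Lf_par h1.1)
  exact hnoT (final_step h hm hV hW hn9 (fun k hk => h.exists_TD hm hk (by omega) hleaf) hno hdeg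
    v hv)
end

/-- **Theorem 4 (upper bound)**: for `m ≥ 9` and `n ≥ m² - m + 1`, any graph `G` on `2n - 1`
vertices contains the fan `F_m` or its complement contains any given tree on `n` vertices. -/
theorem ramsey_tree_fan_upper {V W : Type*} [Fintype V] [Fintype W]
    (m n : ℕ) (hm : 9 ≤ m) (hn : m ^ 2 - m + 1 ≤ n)
    (T : SimpleGraph V) (hT : T.IsTree) (hTcard : Fintype.card V = n)
    (G : SimpleGraph W) (hGcard : Fintype.card W = 2 * n - 1) :
    Contains G (fan m) ∨ Contains Gᶜ T := by
  have hn' : m * m + 1 ≤ n + m := by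
    have h1 : m ≤ m ^ 2 := by nlinarith
    have h2 : m ^ 2 = m * m := by ring
    omega
  exact main_thm hT hm hn' hTcard hGcard
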